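/- Let P ⊆ ℝ^d be a d-dimensional simplicial reflexive polytope with d ≥ 3 and exactly 3d−1 vertices, and suppose ν_P = 0. Then either d is even and P splits into (d−2)/2 copies of V2 and one copy of the pentagon E2, or d is odd and P splits into (d−3)/2 copies of V2 and one copy of the 3-polytope Q3. -/

import Mathlib

noncomputable section

/-- The standard inner product on `ℝ^d`. -/
def dotp {d : ℕ} (x y : Fin d → ℝ) : ℝ := ∑ i, x i * y i

/-- `x` is a point of the lattice `ℤ^d`. -/
def IsLP {d : ℕ} (x : Fin d → ℝ) : Prop := ∀ i, ∃ n : ℤ, x i = (n : ℝ)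

/-- A lattice polytope: convex hull of finitely many lattice points. -/
def IsLatticePolytope {d : ℕ} (P : Set (Fin d → ℝ)) : Prop :=
  ∃ V : Finset (Fin d → ℝ), (∀ v ∈ V, IsLP v) ∧ P = convexHull ℝ (V : Set (Fin d → ℝ))

/-- The dual polytope `P* = {x | ⟨x,y⟩ ≤ 1 ∀ y ∈ P}`. -/
def dualPolytope {d : ℕ} (P : Set (Fin d → ℝ)) : Set (Fin d → ℝ) :=
  {x | ∀ y ∈ P, dotp x y ≤ 1}

/-- `P` is a reflexive polytope: a (`d`-dimensional) lattice polytope with `0` in its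
interior whose dual is again a lattice polytope. -/
def IsReflexive {d : ℕ} (P : Set (Fin d → ℝ)) : Prop :=
  IsLatticePolytope P ∧ (0 : Fin d → ℝ) ∈ interior P ∧ IsLatticePolytope (dualPolytope P)

/-- `F` is a facet of `P` with (uniquely determined) outer normal `u`, normalized by
`⟨u, F⟩ = 1` (possible since `0` is in the interior of `P`). -/
def IsFacetNormal {d : ℕ} (P F : Set (Fin d → ℝ)) (u : Fin d → ℝ) : Prop :=
  F.Nonempty ∧ (∀ y ∈ P, dotp u y ≤ 1) ∧ F = {y ∈ P | dotp u y = 1} ∧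
    Module.finrank ℝ (vectorSpan ℝ F) = d - 1

/-- `F` is a facet of `P`. -/
def IsFacet {d : ℕ} (P F : Set (Fin d → ℝ)) : Prop := ∃ u, IsFacetNormal P F u

/-- `P` is simplicial: every facet has exactly `d` vertices. -/
def IsSimplicial {d : ℕ} (P : Set (Fin d → ℝ)) : Prop :=
  ∀ F, IsFacet P F → (Set.extremePoints ℝ F).ncard = d

/-- Vertices of the hexagon `V₂`. -/
def V2v : Set (Fin 2 → ℤ) := {![1,0], ![0,1], ![1,1], ![-1,0], ![0,-1], ![-1,-1]}

/-- Vertices of the pentagon `Ṽ₂`. -/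
def tV2v : Set (Fin 2 → ℤ) := {![1,0], ![0,1], ![1,1], ![-1,0], ![0,-1]}

/-- Vertices of the pentagon `E₁`. -/
def E1v : Set (Fin 2 → ℤ) := {![1,0], ![-1,2], ![-1,1], ![0,-1], ![1,-1]}

/-- Vertices of the pentagon `E₂`. -/
def E2v : Set (Fin 2 → ℤ) := {![1,0], ![0,1], ![-1,1], ![-1,-1], ![1,-1]}

/-- Vertices of the 3-polytope `Q₃`. -/
def Q3v : Set (Fin 3 → ℤ) :=
  {![1,0,0], ![-1,0,0], ![0,1,0], ![0,-1,0], ![1,1,0], ![-1,-1,0], ![0,0,1], ![0,0,-1]}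

/-- Vertices of the 3-polytope `Q₃'`. -/
def Q3'v : Set (Fin 3 → ℤ) :=
  {![1,0,0], ![-1,0,0], ![0,1,0], ![0,-1,0], ![1,1,0], ![-1,-1,0], ![0,0,1], ![1,0,-1]}

/-- Embed `ℤ²` into coordinates `o, o+1` of `ℝ^d`. -/
def embed2 (d o : ℕ) (v : Fin 2 → ℤ) : Fin d → ℝ :=
  fun i => if (i : ℕ) = o then (v 0 : ℝ) else if (i : ℕ) = o + 1 then (v 1 : ℝ) else 0

/-- Embed `ℤ³` into coordinates `0, 1, 2` of `ℝ^d`. -/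
def embed3 (d : ℕ) (v : Fin 3 → ℤ) : Fin d → ℝ :=
  fun i => if (i : ℕ) = 0 then (v 0 : ℝ) else if (i : ℕ) = 1 then (v 1 : ℝ)
    else if (i : ℕ) = 2 then (v 2 : ℝ) else 0

/-- Standard model of a polytope in `ℝ^d` that splits into a polygon with vertex set `Q`
(in coordinates `0,1`) and `(d-2)/2` copies of `V₂` (in the remaining coordinate pairs). -/
def splitModel2 (d : ℕ) (Q : Set (Fin 2 → ℤ)) : Set (Fin d → ℝ) :=
  convexHull ℝ (embed2 d 0 '' Q ∪ ⋃ j ∈ Finset.range ((d - 2) / 2), embed2 d (2 * j + 2) '' V2v)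

/-- Standard model of a polytope in `ℝ^d` that splits into a 3-polytope with vertex set `Q`
(in coordinates `0,1,2`) and `(d-3)/2` copies of `V₂` (in the remaining coordinate pairs). -/
def splitModel3 (d : ℕ) (Q : Set (Fin 3 → ℤ)) : Set (Fin d → ℝ) :=
  convexHull ℝ (embed3 d '' Q ∪ ⋃ j ∈ Finset.range ((d - 3) / 2), embed2 d (2 * j + 3) '' V2v)

/-- Standard model of a polytope in `ℝ^d` that splits into `d/2` copies of `V₂`. -/
def splitModelV2 (d : ℕ) : Set (Fin d → ℝ) :=
  convexHull ℝ (⋃ j ∈ Finset.range (d / 2), embed2 d (2 * j) '' V2v)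

/-- `φ` is a unimodular transformation: a linear automorphism of `ℝ^d` mapping the lattice
`ℤ^d` onto itself. `P` splits into given polytopes iff some unimodular transformation maps `P`
onto the corresponding standard model. -/
def Unimodular {d : ℕ} (φ : (Fin d → ℝ) ≃ₗ[ℝ] (Fin d → ℝ)) : Prop :=
  ∀ x, IsLP x ↔ IsLP (φ x)

/-!
A facet of `P` spans a basis `B` of `ℝ ^ d`; call the sum of the `B`-coordinates of a vertex its
level, so that the facet is the set of vertices at level `1` and all other levels are integers
`≤ 0`. A vertex at level `0` has a negative coordinate, and for each `i` at most one of them is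
negative at `i`, namely the vertex replacing `B i` in the neighbouring facet. Hence at most `d`
vertices have level `0`, and since the levels of all `3 * d - 1` vertices sum to zero, every level
is `≥ -2`.

If some facet has a vertex `z` at level `-2`, equality holds throughout: there are `d` vertices at
level `0` and `d - 2` at level `-1`. Following `z` through the neighbouring facets shows that the
vertices at level `0` are `B (σ i) - B i` for an involution `σ`, that `z = -B a - B b` with
`σ a = b`, and that `-B i` is a vertex exactly for `i ≠ a, b`. The `2`-cycles of `σ` cut this
configuration into hexagons and one pentagon. If all levels at all facets are `≥ -1`, then duality
between vertices and facets makes `P` centrally symmetric. The vertices at level `0` are then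
`B (σ i) - B i` for `i` different from the single fixed point `o` of `σ`, giving hexagons and the
segment `±B o`, which together with one hexagon forms `Q3`.
-/

section BasisExchange

variable {ι K E : Type*} [Field K] [AddCommGroup E] [Module K E] {B B' : Module.Basis ι K E}
  {w : E} {i j : ι}

lemma exists_basis_exchange [Finite ι] (B : Module.Basis ι K E) (hw : B.repr w i ≠ 0) :
    ∃ B' : Module.Basis ι K E, B' i = w ∧ ∀ j ≠ i, B' j = B j := by
  classical
  have := Fintype.ofFinite ι
  have hli : LinearIndependent K (Function.update B i w) :=
    B.linearIndependent.update i w ⟨1, one_mem _, B.repr w, mem_nonZeroDivisors_of_ne_zero hw,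
      by rw [one_smul, B.linearCombination_repr]⟩
  have : Nonempty ι := ⟨i⟩
  refine ⟨basisOfLinearIndependentOfCardEqFinrank hli (Module.finrank_eq_card_basis B).symm, ?_, ?_⟩
  · simp
  · intro j hj
    simp [hj]

lemma repr_eq_add_of_agree_off (h : ∀ j ≠ i, B' j = B j) (v : E) (m : ι) :
    B.repr v m = B'.repr v m + B'.repr v i * (B.repr (B' i) m - B.repr (B i) m) := by
  classical
  suffices B.coord m = B'.coord m + (B.repr (B' i) m - B.repr (B i) m) • B'.coord i by
    simpa [mul_comm] using LinearMap.congr_fun this v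
  refine B'.ext fun j => ?_
  by_cases hj : j = i
  · subst hj
    simp
  · have hBj : B'.repr (B j) = Finsupp.single j 1 := by rw [← h j hj, B'.repr_self]
    simp [h j hj, hBj, hj]

lemma repr_self_of_agree_off (h : ∀ j ≠ i, B' j = B j) (v : E) :
    B.repr v i = B'.repr v i * B.repr (B' i) i := by
  have := repr_eq_add_of_agree_off h v i
  simp only [Module.Basis.repr_self, Finsupp.single_eq_same] at this
  rw [this]
  ring

lemma repr_ne_of_agree_off (h : ∀ j ≠ i, B' j = B j) (v : E) (hj : j ≠ i) :
    B.repr v j = B'.repr v j + B'.repr v i * B.repr (B' i) j := by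
  have := repr_eq_add_of_agree_off h v j
  simpa [hj] using this

end BasisExchange

section Level

variable {ι E : Type*} [Fintype ι] [AddCommGroup E] [Module ℝ E]

/-- The level function of a basis: the linear functional with value `1` on each basis vector.
If the basis consists of the vertices of a facet, this is the outer normal of the facet. -/
def level (B : Module.Basis ι ℝ E) : E →ₗ[ℝ] ℝ := ∑ i, B.coord i

variable {B : Module.Basis ι ℝ E} {v : E}

lemma level_apply (B : Module.Basis ι ℝ E) (v : E) : level B v = ∑ i, B.repr v i := by
  simp [level]

@[simp]
lemma level_self (B : Module.Basis ι ℝ E) (i : ι) : level B (B i) = 1 := by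
  classical
  simp [level_apply, Finsupp.single_apply]

lemma level_eq_of_apply_eq_one {f : E →ₗ[ℝ] ℝ} (h : ∀ i, f (B i) = 1) : level B = f :=
  B.ext fun i => by rw [level_self, h]

lemma level_eq_sub_of_agree_off {B' : Module.Basis ι ℝ E} {i : ι} {k : ℝ}
    (h : ∀ j ≠ i, B' j = B j) (hk : k * -B.repr (B' i) i = 1 - level B (B' i)) (v : E) :
    level B' v = level B v - k * B.repr v i := by
  suffices level B' = level B - k • B.coord i by simp [this]
  refine level_eq_of_apply_eq_one fun j => ?_
  by_cases hj : j = i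
  · simp only [hj, LinearMap.sub_apply, LinearMap.smul_apply, Module.Basis.coord_apply,
      smul_eq_mul]
    linarith
  · simp [h j hj, hj]

lemma eq_zero_of_repr_nonneg (h : ∀ i, 0 ≤ B.repr v i) (hl : level B v = 0) : v = 0 := by
  rw [level_apply, Finset.sum_eq_zero_iff_of_nonneg fun i _ => h i] at hl
  exact B.ext_elem fun i => by simpa using hl i (Finset.mem_univ i)

lemma eq_zero_of_repr_eq_zero_off {i : ι} (h : ∀ j ≠ i, B.repr v j = 0) (hl : level B v = 0) :
    v = 0 := by
  rw [level_apply, Fintype.sum_eq_single i h] at hl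
  refine B.ext_elem fun j => ?_
  by_cases hj : j = i <;> simp [hj, hl, h]

lemma exists_repr_neg (hv : v ≠ 0) (hl : level B v = 0) : ∃ i, B.repr v i < 0 := by
  contrapose! hv
  exact eq_zero_of_repr_nonneg hv hl

lemma exists_repr_sub_nonneg (hint : ∀ i, ∃ n : ℤ, B.repr v i = n) (h : ∀ i, 0 ≤ B.repr v i)
    (hl : 0 < level B v) : ∃ j, ∀ i, 0 ≤ B.repr (v - B j) i := by
  classical
  rw [level_apply] at hl
  obtain ⟨j, -, hj⟩ := Finset.exists_lt_of_sum_lt (f := fun _ => (0 : ℝ)) (by simpa using hl)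
  have hj1 : 1 ≤ B.repr v j := by
    obtain ⟨n, hn⟩ := hint j
    rw [hn] at hj ⊢
    exact_mod_cast hj
  refine ⟨j, fun i => ?_⟩
  by_cases hij : j = i
  · subst hij
    simpa using hj1
  · simpa [Finsupp.single_apply, hij] using h i

lemma exists_eq_of_repr_nonneg (hint : ∀ i, ∃ n : ℤ, B.repr v i = n) (h : ∀ i, 0 ≤ B.repr v i)
    (hl : level B v = 1) : ∃ j, v = B j := by
  obtain ⟨j, hj⟩ := exists_repr_sub_nonneg hint h (by rw [hl]; exact one_pos)
  exact ⟨j, sub_eq_zero.1 <| eq_zero_of_repr_nonneg hj (by rw [map_sub, hl, level_self, sub_self])⟩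

lemma finrank_vectorSpan_add_one_of_level_eq_one [Nonempty ι] {S : Set E}
    (hS : ∀ x ∈ S, level B x = 1) (hB : ∀ i, B i ∈ S) :
    Module.finrank ℝ (vectorSpan ℝ S) + 1 = Fintype.card ι := by
  have := Module.Finite.of_basis B
  obtain ⟨n, hn⟩ := Nat.exists_eq_succ_of_ne_zero (Fintype.card_ne_zero (α := ι))
  have hle : vectorSpan ℝ S ≤ LinearMap.ker (level B) := by
    rw [vectorSpan_def, Submodule.span_le]
    rintro _ ⟨x, hx, y, hy, rfl⟩
    simp [hS x hx, hS y hy]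
  have hker : Module.finrank ℝ (LinearMap.ker (level B)) + 1 = Fintype.card ι := by
    have hsurj : LinearMap.range (level B) = ⊤ := by
      refine LinearMap.range_eq_top.2 (LinearMap.surjective fun h => ?_)
      simpa [h] using level_self B (Classical.arbitrary ι)
    have := LinearMap.finrank_range_add_finrank_ker (level B)
    rw [hsurj, finrank_top, Module.finrank_self, Module.finrank_eq_card_basis B] at this
    omega
  have hge : n ≤ Module.finrank ℝ (vectorSpan ℝ S) := by
    rw [← B.linearIndependent.affineIndependent.finrank_vectorSpan hn]
    exact Submodule.finrank_mono (vectorSpan_mono ℝ (Set.range_subset_iff.2 hB))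
  have := Submodule.finrank_mono hle
  omega

end Level

section Polytope

variable {d : ℕ} {P : Set (Fin d → ℝ)} {V : Finset (Fin d → ℝ)}

lemma dotp_eq_dotProductEquiv (u v : Fin d → ℝ) :
    dotp u v = dotProductEquiv ℝ (Fin d) u v := rfl

lemma exists_int_dotp {u v : Fin d → ℝ} (hu : IsLP u) (hv : IsLP v) : ∃ n : ℤ, dotp u v = n := by
  choose a ha using hu
  choose b hb using hv
  exact ⟨∑ i, a i * b i, by simp [dotp, ha, hb]⟩

lemma IsLatticePolytope.isCompact (hP : IsLatticePolytope P) : IsCompact P := by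
  obtain ⟨W, -, rfl⟩ := hP
  exact W.finite_toSet.isCompact_convexHull ℝ

lemma IsLatticePolytope.convex (hP : IsLatticePolytope P) : Convex ℝ P := by
  obtain ⟨W, -, rfl⟩ := hP
  exact convex_convexHull ℝ _

lemma IsLatticePolytope.isLP (hP : IsLatticePolytope P) {v : Fin d → ℝ}
    (hv : v ∈ Set.extremePoints ℝ P) : IsLP v := by
  obtain ⟨W, hW, rfl⟩ := hP
  exact hW v (extremePoints_convexHull_subset hv)

lemma IsLatticePolytope.convexHull_eq (hP : IsLatticePolytope P)
    (hV : (V : Set (Fin d → ℝ)) = Set.extremePoints ℝ P) :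
    convexHull ℝ (V : Set (Fin d → ℝ)) = P := by
  have := closure_convexHull_extremePoints hP.isCompact hP.convex
  rwa [← hV, (V.finite_toSet.isClosed_convexHull ℝ).closure_eq] at this

lemma apply_le_of_mem_convexHull {E : Type*} [AddCommGroup E] [Module ℝ E] {S : Set E}
    (f : E →ₗ[ℝ] ℝ) {c : ℝ} (h : ∀ v ∈ S, f v ≤ c) {x : E} (hx : x ∈ convexHull ℝ S) : f x ≤ c :=
  convexHull_min (t := {y | f y ≤ c}) h (convex_halfSpace_le f.isLinear c) hx

lemma mem_dualPolytope_convexHull {S : Set (Fin d → ℝ)} {u : Fin d → ℝ} :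
    u ∈ dualPolytope (convexHull ℝ S) ↔ ∀ v ∈ S, dotp u v ≤ 1 :=
  ⟨fun h v hv => h v (subset_convexHull ℝ _ hv),
    fun h _ hy => apply_le_of_mem_convexHull (dotProductEquiv ℝ (Fin d) u) h hy⟩

lemma eq_zero_of_nonneg_of_mem_nhds {E : Type*} [NormedAddCommGroup E] [NormedSpace ℝ E]
    [FiniteDimensional ℝ E] {S : Set E} (hS : S ∈ nhds 0) (f : E →ₗ[ℝ] ℝ)
    (hf : ∀ x ∈ S, 0 ≤ f x) : f = 0 := by
  have hmin : IsLocalMin f.toContinuousLinearMap 0 := by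
    filter_upwards [hS] with x hx
    simpa using hf x hx
  have := hmin.hasFDerivAt_eq_zero f.toContinuousLinearMap.hasFDerivAt
  ext x
  simpa using DFunLike.congr_fun this x

lemma mem_extremePoints_dualPolytope (B : Module.Basis (Fin d) ℝ (Fin d → ℝ)) (hB : ∀ i, B i ∈ P)
    {u : Fin d → ℝ} (hu : u ∈ dualPolytope P) (huB : ∀ i, dotp u (B i) = 1) :
    u ∈ Set.extremePoints ℝ (dualPolytope P) := by
  rw [mem_extremePoints_iff_left]
  refine ⟨hu, ?_⟩
  rintro x hx y hy ⟨a, b, ha, hb, hab, rfl⟩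
  refine (dotProductEquiv ℝ (Fin d)).injective (B.ext fun i => ?_)
  have hxi := hx _ (hB i)
  have hyi := hy _ (hB i)
  have hi := huB i
  simp only [dotp_eq_dotProductEquiv, map_add, map_smul, LinearMap.add_apply,
    LinearMap.smul_apply, smul_eq_mul] at hxi hyi hi ⊢
  rw [hi]
  nlinarith

open Filter Topology in
lemma exists_pos_forall_add_mul_abs_le {ι : Type*} (s : Finset ι) {f : ι → ℝ} (g : ι → ℝ) {c : ℝ}
    (hf : ∀ i ∈ s, f i ≤ c) (hg : ∀ i ∈ s, f i = c → g i = 0) :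
    ∃ ε > 0, ∀ i ∈ s, f i + ε * |g i| ≤ c := by
  have h : ∀ᶠ ε in 𝓝[>] (0 : ℝ), ∀ i ∈ s, f i + ε * |g i| ≤ c := by
    refine (eventually_all_finset s).2 fun i hi => ?_
    rcases (hf i hi).eq_or_lt with heq | hlt
    · simp [hg i hi heq, heq]
    · have hcont : Continuous fun ε : ℝ => f i + ε * |g i| := by fun_prop
      have := (hcont.tendsto' 0 (f i) (by simp)).eventually_le_const hlt
      exact this.filter_mono nhdsWithin_le_nhds
  exact (h.and self_mem_nhdsWithin).exists.imp fun ε hε => ⟨hε.2, hε.1⟩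

lemma span_tight_eq_top {u : Fin d → ℝ}
    (hu : u ∈ Set.extremePoints ℝ (dualPolytope (convexHull ℝ (V : Set (Fin d → ℝ))))) :
    Submodule.span ℝ {v | v ∈ V ∧ dotp u v = 1} = ⊤ := by
  by_contra hne
  obtain ⟨f, hf0, hf⟩ := Submodule.exists_le_ker_of_lt_top _ (lt_top_iff_ne_top.2 hne)
  obtain ⟨h, rfl⟩ := (dotProductEquiv ℝ (Fin d)).surjective f
  obtain ⟨ε, hε, hεV⟩ := exists_pos_forall_add_mul_abs_le V (dotp h)
    (mem_dualPolytope_convexHull.1 hu.1) fun v hv huv => hf (Submodule.subset_span ⟨hv, huv⟩)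
  have hadd : ∀ δ : ℝ, |δ| = ε → u + δ • h ∈ dualPolytope (convexHull ℝ (V : Set _)) := by
    intro δ hδ
    refine mem_dualPolytope_convexHull.2 fun v hv => le_trans ?_ (hεV v hv)
    rw [← hδ, ← abs_mul]
    simpa [dotp_eq_dotProductEquiv] using le_abs_self (δ * dotp h v)
  have hmid : u ∈ openSegment ℝ (u + ε • h) (u + (-ε) • h) :=
    ⟨1 / 2, 1 / 2, by norm_num, by norm_num, by norm_num, by module⟩
  have hεh := (mem_extremePoints_iff_left.1 hu).2 _ (hadd ε (abs_of_pos hε)) _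
    (hadd (-ε) (by rw [abs_neg, abs_of_pos hε])) hmid
  have hh : h = 0 := by simpa [hε.ne'] using hεh
  exact hf0 (by rw [hh, map_zero])

end Polytope

/-- The vectors of the basis `B` are the vertices of a facet of the polytope with vertex set `V`,
the facets being simplices whose normals `level B` belong to the dual lattice. -/
structure IsFacetBasis {d : ℕ} (V : Finset (Fin d → ℝ))
    (B : Module.Basis (Fin d) ℝ (Fin d → ℝ)) : Prop where
  mem : ∀ i, B i ∈ V
  level_le_one : ∀ v ∈ V, level B v ≤ 1
  exists_eq_of_level_eq_one : ∀ v ∈ V, level B v = 1 → ∃ i, v = B i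
  exists_int_level : ∀ v, IsLP v → ∃ n : ℤ, level B v = n

/-- The facet `B'` is the neighbour of the facet `B` along the ridge opposite to the vertex `B i`.
The normals of two such facets differ by the multiple `k` of the `i`-th dual basis vector. -/
structure IsNeighbour {d : ℕ} (V : Finset (Fin d → ℝ))
    (B B' : Module.Basis (Fin d) ℝ (Fin d → ℝ)) (i : Fin d) (k : ℝ) : Prop where
  isFacetBasis : IsFacetBasis V B'
  apply_of_ne : ∀ j ≠ i, B' j = B j
  one_le : 1 ≤ k
  level_eq : ∀ v, level B' v = level B v - k * B.repr v i

section Facets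

variable {d : ℕ} {P : Set (Fin d → ℝ)} {V : Finset (Fin d → ℝ)}
  {B : Module.Basis (Fin d) ℝ (Fin d → ℝ)}

lemma IsSimplicial.exists_eq_of_dotp_eq_one (hs : IsSimplicial P) (hd : 0 < d)
    (hB : ∀ i, B i ∈ Set.extremePoints ℝ P) {u : Fin d → ℝ} (hu : u ∈ dualPolytope P)
    (huB : ∀ i, dotp u (B i) = 1) {v : Fin d → ℝ} (hv : v ∈ Set.extremePoints ℝ P)
    (huv : dotp u v = 1) : ∃ i, v = B i := by
  have : NeZero d := ⟨hd.ne'⟩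
  set F : Set (Fin d → ℝ) := {y ∈ P | dotp u y = 1}
  have hF : ∀ {x}, x ∈ Set.extremePoints ℝ P → dotp u x = 1 → x ∈ Set.extremePoints ℝ F :=
    fun hx hux => inter_extremePoints_subset_extremePoints_of_subset (fun y hy => hy.1)
      ⟨⟨hx.1, hux⟩, hx⟩
  have hBF : ∀ i, B i ∈ F := fun i => ⟨(hB i).1, huB i⟩
  have hlevel : level B = dotProductEquiv ℝ (Fin d) u := level_eq_of_apply_eq_one huB
  have hdim : Module.finrank ℝ (vectorSpan ℝ F) + 1 = Fintype.card (Fin d) :=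
    finrank_vectorSpan_add_one_of_level_eq_one (fun x hx => by rw [hlevel]; exact hx.2) hBF
  have hcard : (Set.extremePoints ℝ F).ncard = d :=
    hs F ⟨u, ⟨B 0, hBF 0⟩, hu, rfl, by rw [Fintype.card_fin] at hdim; omega⟩
  have hrange : Set.range B = Set.extremePoints ℝ F := by
    refine Set.eq_of_subset_of_ncard_le (Set.range_subset_iff.2 fun i => hF (hB i) (huB i)) ?_
      (Set.finite_of_ncard_pos (by omega))
    rw [hcard, Set.ncard_range_of_injective B.injective, Nat.card_fin]
  obtain ⟨i, hi⟩ : v ∈ Set.range B := hrange ▸ hF hv huv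
  exact ⟨i, hi.symm⟩

lemma isFacetBasis_of_level_le_one (hd : 0 < d) (hP : IsReflexive P) (hs : IsSimplicial P)
    (hV : (V : Set (Fin d → ℝ)) = Set.extremePoints ℝ P) (hB : ∀ i, B i ∈ V)
    (hle : ∀ v ∈ V, level B v ≤ 1) : IsFacetBasis V B := by
  obtain ⟨u, hu⟩ := (dotProductEquiv ℝ (Fin d)).surjective (level B)
  have hlevel : ∀ v, level B v = dotp u v := fun v => by rw [← hu, dotp_eq_dotProductEquiv]
  have huB : ∀ i, dotp u (B i) = 1 := fun i => by rw [← hlevel, level_self]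
  have hVext : ∀ {v}, v ∈ V → v ∈ Set.extremePoints ℝ P := fun hv => hV ▸ hv
  have hud : u ∈ dualPolytope P := by
    rw [← hP.1.convexHull_eq hV, mem_dualPolytope_convexHull]
    exact fun v hv => hlevel v ▸ hle v hv
  refine ⟨hB, hle, fun v hv hv1 => ?_, fun v hv => ?_⟩
  · exact hs.exists_eq_of_dotp_eq_one hd (fun i => hVext (hB i)) hud huB (hVext hv) (hlevel v ▸ hv1)
  · rw [hlevel]
    exact exists_int_dotp
      (hP.2.2.isLP (mem_extremePoints_dualPolytope B (fun i => (hVext (hB i)).1) hud huB)) hv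

lemma exists_isFacetBasis_level_eq_dotp (hd : 0 < d) (hP : IsReflexive P) (hs : IsSimplicial P)
    (hV : (V : Set (Fin d → ℝ)) = Set.extremePoints ℝ P) {u : Fin d → ℝ}
    (hu : u ∈ Set.extremePoints ℝ (dualPolytope P)) :
    ∃ B, IsFacetBasis V B ∧ ∀ v, level B v = dotp u v := by
  rw [← hP.1.convexHull_eq hV] at hu
  have hfinrank : Module.finrank ℝ (Submodule.span ℝ {v | v ∈ V ∧ dotp u v = 1}) = d := by
    rw [span_tight_eq_top hu, finrank_top, Module.finrank_fin_fun]
  obtain ⟨b, hbT, -, hbli⟩ :=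
    Submodule.exists_fun_fin_finrank_span_eq ℝ {v | v ∈ V ∧ dotp u v = 1}
  have : NeZero d := ⟨hd.ne'⟩
  let e := finCongr hfinrank.symm
  let B := basisOfLinearIndependentOfCardEqFinrank (hbli.comp e e.injective) (by simp)
  have hBT : ∀ i, B i ∈ V ∧ dotp u (B i) = 1 := fun i => by simpa [B] using hbT (e i)
  have hlevel : ∀ v, level B v = dotp u v :=
    LinearMap.congr_fun
      (level_eq_of_apply_eq_one (f := dotProductEquiv ℝ (Fin d) u) fun i => (hBT i).2)
  refine ⟨B, isFacetBasis_of_level_le_one hd hP hs hV (fun i => (hBT i).1) fun v hv => ?_, hlevel⟩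
  rw [hlevel]
  exact mem_dualPolytope_convexHull.1 hu.1 v hv

lemma exists_isFacetBasis (hd : 0 < d) (hP : IsReflexive P) (hs : IsSimplicial P)
    (hV : (V : Set (Fin d → ℝ)) = Set.extremePoints ℝ P) : ∃ B, IsFacetBasis V B := by
  obtain ⟨u, hu⟩ := hP.2.2.isCompact.extremePoints_nonempty ⟨0, fun y _ => by simp [dotp]⟩
  exact (exists_isFacetBasis_level_eq_dotp hd hP hs hV hu).imp fun B hB => hB.1

lemma mem_of_forall_level_le_one (hd : 0 < d) (hP : IsReflexive P) (hs : IsSimplicial P)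
    (hV : (V : Set (Fin d → ℝ)) = Set.extremePoints ℝ P) {x : Fin d → ℝ}
    (hx : ∀ B, IsFacetBasis V B → level B x ≤ 1) : x ∈ P := by
  by_contra hxP
  obtain ⟨f, s, hf, hfx⟩ := geometric_hahn_banach_closed_point hP.1.convex
    hP.1.isCompact.isClosed hxP
  have hs0 : 0 < s := by simpa using hf 0 (interior_subset hP.2.1)
  obtain ⟨u, hu⟩ := (dotProductEquiv ℝ (Fin d)).surjective (s⁻¹ • (f : (Fin d → ℝ) →ₗ[ℝ] ℝ))
  have hfu : ∀ y, dotp u y = s⁻¹ * f y := LinearMap.congr_fun hu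
  have hmem : u ∈ dualPolytope P := fun y hy => by
    rw [hfu, inv_mul_le_iff₀ hs0, mul_one]
    exact (hf y hy).le
  -- Krein–Milman: a bound on the vertices of the dual holds on all of it.
  have hdual : dualPolytope P ⊆ {w | dotProductEquiv ℝ (Fin d) x w ≤ 1} := by
    rw [← closure_convexHull_extremePoints hP.2.2.isCompact hP.2.2.convex]
    refine closure_minimal (fun w hw => apply_le_of_mem_convexHull _ (fun w hw => ?_) hw)
      (isClosed_le (LinearMap.continuous_of_finiteDimensional _) continuous_const)
    obtain ⟨B, hB, hl⟩ := exists_isFacetBasis_level_eq_dotp hd hP hs hV hw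
    exact (dotProduct_comm x w).trans_le ((hl x).symm.trans_le (hx B hB))
  have hux : dotp u x ≤ 1 := (dotProduct_comm u x).trans_le (hdual hmem)
  rw [hfu, inv_mul_le_iff₀ hs0, mul_one] at hux
  exact hfx.not_ge hux

lemma neg_mem_of_forall_neg_one_le_level (hd : 0 < d) (hP : IsReflexive P) (hs : IsSimplicial P)
    (hV : (V : Set (Fin d → ℝ)) = Set.extremePoints ℝ P)
    (hlevel : ∀ B, IsFacetBasis V B → ∀ v ∈ V, -1 ≤ level B v) {v : Fin d → ℝ} (hv : v ∈ V) :
    -v ∈ V := by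
  have hsub : P ⊆ -P := by
    have hconv : Convex ℝ (-P) := hP.1.convex.neg
    nth_rw 1 [← hP.1.convexHull_eq hV]
    refine convexHull_min (fun w hw => ?_) hconv
    refine mem_of_forall_level_le_one hd hP hs hV fun B hB => ?_
    rw [map_neg]
    linarith [hlevel B hB w hw]
  have hneg : -P = P := (Set.neg_subset.2 hsub).antisymm hsub
  have hext : -(V : Set (Fin d → ℝ)) = V := by
    have := image_extremePoints (𝕜 := ℝ) (LinearEquiv.neg ℝ : (Fin d → ℝ) ≃ₗ[ℝ] _) P
    rw [LinearEquiv.coe_neg] at this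
    change (fun x => -x) '' _ = Set.extremePoints ℝ ((fun x => -x) '' _) at this
    rwa [Set.image_neg_eq_neg, Set.image_neg_eq_neg, hneg, ← hV] at this
  exact Set.mem_neg.1 (hext.symm ▸ hv)

lemma exists_repr_neg_of_isReflexive (hP : IsReflexive P)
    (hV : (V : Set (Fin d → ℝ)) = Set.extremePoints ℝ P)
    (B : Module.Basis (Fin d) ℝ (Fin d → ℝ)) (i : Fin d) : ∃ v ∈ V, B.repr v i < 0 := by
  by_contra! h
  have hcoord : -B.coord i = 0 := by
    refine neg_eq_zero.2 (eq_zero_of_nonneg_of_mem_nhds (mem_interior_iff_mem_nhds.1 hP.2.1) _ ?_)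
    intro x hx
    rw [← hP.1.convexHull_eq hV] at hx
    have := apply_le_of_mem_convexHull (-B.coord i) (c := 0) (fun v hv => by simpa using h v hv) hx
    simpa using this
  simpa using LinearMap.congr_fun hcoord (B i)

lemma IsFacetBasis.repr_nonneg (hB : IsFacetBasis V B) {v : Fin d → ℝ} (hv : v ∈ V)
    (hl : level B v = 1) (i : Fin d) : 0 ≤ B.repr v i := by
  classical
  obtain ⟨j, rfl⟩ := hB.exists_eq_of_level_eq_one v hv hl
  rw [B.repr_self_apply]
  split_ifs <;> norm_num

/- The new vertex minimises the ratio `(1 - level B v) / -B.repr v i`, as in the simplex method: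
the minimum is the slope by which the normal can be tilted. -/
lemma IsFacetBasis.exists_isNeighbour (hd : 0 < d) (hP : IsReflexive P) (hs : IsSimplicial P)
    (hV : (V : Set (Fin d → ℝ)) = Set.extremePoints ℝ P) (hB : IsFacetBasis V B) (i : Fin d) :
    ∃ B' k, IsNeighbour V B B' i k := by
  classical
  obtain ⟨v₀, hv₀, hv₀i⟩ := exists_repr_neg_of_isReflexive hP hV B i
  obtain ⟨w, hw, hmin⟩ := Finset.exists_min_image (V.filter fun v => B.repr v i < 0)
    (fun v => (1 - level B v) / -B.repr v i) ⟨v₀, Finset.mem_filter.2 ⟨hv₀, hv₀i⟩⟩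
  obtain ⟨hwV, hwi⟩ := Finset.mem_filter.1 hw
  set k := (1 - level B w) / -B.repr w i
  have hkw : k * -B.repr w i = 1 - level B w := div_mul_cancel₀ _ (neg_ne_zero.2 hwi.ne)
  have hkpos : 0 < k := by
    have hlt : level B w < 1 := (hB.level_le_one w hwV).lt_of_ne
      fun h => (hB.repr_nonneg hwV h i).not_gt hwi
    exact div_pos (by linarith) (by linarith)
  have hmin' : ∀ v ∈ V, level B v - k * B.repr v i ≤ 1 := by
    intro v hv
    rcases lt_or_ge (B.repr v i) 0 with hvi | hvi
    · have := hmin v (Finset.mem_filter.2 ⟨hv, hvi⟩)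
      rw [le_div_iff₀ (by linarith)] at this
      linarith
    · nlinarith [hB.level_le_one v hv]
  obtain ⟨B', hB'i, hB'⟩ := exists_basis_exchange B hwi.ne
  have hB'V : ∀ j, B' j ∈ V := fun j => by
    by_cases hj : j = i
    · rwa [hj, hB'i]
    · rw [hB' j hj]
      exact hB.mem j
  have hlevel : ∀ v, level B' v = level B v - k * B.repr v i :=
    level_eq_sub_of_agree_off hB' (by rwa [hB'i])
  have hfacet : IsFacetBasis V B' := isFacetBasis_of_level_le_one hd hP hs hV hB'V
    fun v hv => (hlevel v).trans_le (hmin' v hv)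
  refine ⟨B', k, hfacet, hB', ?_, hlevel⟩
  obtain ⟨n, hn⟩ := hfacet.exists_int_level (B i) (hP.1.isLP (hV ▸ hB.mem i))
  have hkn : k = ((1 - n : ℤ) : ℝ) := by
    have := hlevel (B i)
    simp only [hn, level_self, Module.Basis.repr_self, Finsupp.single_eq_same, mul_one] at this
    push_cast
    linarith
  rw [hkn] at hkpos ⊢
  exact_mod_cast hkpos

end Facets

/-- The combinatorial properties of the vertex set `V` of a simplicial reflexive polytope with
`3 * d - 1` vertices summing to zero that determine the polytope. -/
structure IsVertexConfiguration {d : ℕ} (V : Finset (Fin d → ℝ)) : Prop where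
  isLP : ∀ v ∈ V, IsLP v
  card_add_one : V.card + 1 = 3 * d
  sum_eq_zero : ∑ v ∈ V, v = 0
  zero_notMem : 0 ∉ V
  exists_isFacetBasis : ∃ B, IsFacetBasis V B
  exists_isNeighbour : ∀ B, IsFacetBasis V B → ∀ i, ∃ B' k, IsNeighbour V B B' i k
  neg_mem : (∀ B, IsFacetBasis V B → ∀ v ∈ V, -1 ≤ level B v) → ∀ v ∈ V, -v ∈ V

lemma IsReflexive.isVertexConfiguration {d : ℕ} (hd : 0 < d) {P : Set (Fin d → ℝ)}
    (hP : IsReflexive P) (hs : IsSimplicial P) (hcard : (Set.extremePoints ℝ P).ncard = 3 * d - 1)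
    {V : Finset (Fin d → ℝ)} (hV : (V : Set (Fin d → ℝ)) = Set.extremePoints ℝ P)
    (hsum : ∑ v ∈ V, v = 0) : IsVertexConfiguration V where
  isLP v hv := hP.1.isLP (hV ▸ hv)
  card_add_one := by
    rw [← hV, Set.ncard_coe_finset] at hcard
    omega
  sum_eq_zero := hsum
  zero_notMem h := by
    have : NeZero d := ⟨hd.ne'⟩
    exact Set.disjoint_left.1 (disjoint_interior_extremePoints P) hP.2.1 (hV ▸ h)
  exists_isFacetBasis := exists_isFacetBasis hd hP hs hV
  exists_isNeighbour _ hB i := hB.exists_isNeighbour hd hP hs hV i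
  neg_mem h _ hv := neg_mem_of_forall_neg_one_le_level hd hP hs hV h hv

section Neighbours

variable {d : ℕ} {V : Finset (Fin d → ℝ)} {B B' : Module.Basis (Fin d) ℝ (Fin d → ℝ)}
  {v w : Fin d → ℝ} {i j : Fin d} {k : ℝ}

lemma IsFacetBasis.level_cases (hB : IsFacetBasis V B) (hV : IsVertexConfiguration V)
    (hv : v ∈ V) : level B v = 1 ∨ level B v = 0 ∨ level B v ≤ -1 := by
  obtain ⟨n, hn⟩ := hB.exists_int_level v (hV.isLP v hv)
  have hle := hB.level_le_one v hv
  rw [hn] at hle ⊢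
  have : n = 1 ∨ n = 0 ∨ n ≤ -1 := by
    have : n ≤ 1 := by exact_mod_cast hle
    omega
  exact_mod_cast this

lemma IsFacetBasis.exists_eq_of_level_pos (hB : IsFacetBasis V B) (hV : IsVertexConfiguration V)
    (hv : v ∈ V) (hl : 0 < level B v) : ∃ i, v = B i := by
  refine hB.exists_eq_of_level_eq_one v hv ?_
  rcases hB.level_cases hV hv with h | h | h <;> linarith

namespace IsNeighbour

lemma repr_self_mul (h : IsNeighbour V B B' i k) (hl : level B (B' i) = 0) :
    k * B.repr (B' i) i = -1 := by
  have := h.level_eq (B' i)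
  rw [level_self, hl] at this
  linarith

lemma repr_self (h : IsNeighbour V B B' i k) (hl : level B (B' i) = 0) (v : Fin d → ℝ) :
    B'.repr v i = -(k * B.repr v i) := by
  have := repr_self_of_agree_off h.apply_of_ne v
  linear_combination k * this + B'.repr v i * h.repr_self_mul hl

lemma repr_of_ne (h : IsNeighbour V B B' i k) (hl : level B (B' i) = 0) (v : Fin d → ℝ)
    (hj : j ≠ i) : B'.repr v j = B.repr v j + k * B.repr v i * B.repr (B' i) j := by
  have := repr_ne_of_agree_off h.apply_of_ne v hj
  rw [h.repr_self hl] at this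
  linear_combination -this

lemma repr_neg (h : IsNeighbour V B B' i k) (hB : IsFacetBasis V B) :
    B.repr (B' i) i < 0 := by
  have hlevel := h.level_eq (B' i)
  rw [level_self] at hlevel
  have hne : B.repr (B' i) i ≠ 0 := fun h0 => by
    simpa [h0] using repr_self_of_agree_off h.apply_of_ne (B i)
  have hle := hB.level_le_one _ (h.isFacetBasis.mem i)
  exact lt_of_le_of_ne (by nlinarith [h.one_le]) hne

lemma eq_of_level_eq_zero (h : IsNeighbour V B B' i k) (hV : IsVertexConfiguration V)
    (hw : w ∈ V) (hl : level B w = 0) (hi : B.repr w i < 0) : B' i = w := by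
  have hpos : 0 < level B' w := by
    rw [h.level_eq, hl]
    nlinarith [h.one_le]
  obtain ⟨j, rfl⟩ := h.isFacetBasis.exists_eq_of_level_pos hV hw hpos
  by_cases hj : j = i
  · rw [hj]
  · rw [h.apply_of_ne j hj, level_self] at hl
    exact absurd hl one_ne_zero

end IsNeighbour

namespace IsFacetBasis

lemma exists_isNeighbour_through (hB : IsFacetBasis V B) (hV : IsVertexConfiguration V)
    (hw : w ∈ V) (hl : level B w = 0) (hi : B.repr w i < 0) :
    ∃ B' k, IsNeighbour V B B' i k ∧ B' i = w := by
  obtain ⟨B', k, h⟩ := hV.exists_isNeighbour B hB i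
  exact ⟨B', k, h, h.eq_of_level_eq_zero hV hw hl hi⟩

lemma exists_isNeighbour_one_through (hB : IsFacetBasis V B) (hV : IsVertexConfiguration V)
    (hw : w ∈ V) (hl : level B w = 0) (hi : B.repr w i = -1) :
    ∃ B', IsNeighbour V B B' i 1 ∧ B' i = w := by
  obtain ⟨B', k, h, rfl⟩ := hB.exists_isNeighbour_through hV hw hl (by rw [hi]; norm_num)
  have hk : k = 1 := by
    have := h.repr_self_mul hl
    rw [hi] at this
    linarith
  exact ⟨B', hk ▸ h, rfl⟩

lemma eq_of_repr_neg (hB : IsFacetBasis V B) (hV : IsVertexConfiguration V)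
    (hv : v ∈ V) (hlv : level B v = 0) (hvi : B.repr v i < 0)
    (hw : w ∈ V) (hlw : level B w = 0) (hwi : B.repr w i < 0) : v = w := by
  obtain ⟨B', k, h⟩ := hV.exists_isNeighbour B hB i
  rw [← h.eq_of_level_eq_zero hV hv hlv hvi, h.eq_of_level_eq_zero hV hw hlw hwi]

lemma neg_one_le_repr (hB : IsFacetBasis V B) (hV : IsVertexConfiguration V) (hw : w ∈ V)
    (hl : level B w = 0) (i : Fin d) : -1 ≤ B.repr w i := by
  by_contra! h
  obtain ⟨B', k, hN, rfl⟩ := hB.exists_isNeighbour_through hV hw hl (i := i) (by linarith)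
  nlinarith [hN.one_le, hN.repr_self_mul hl]

lemma neg_one_le_repr_of_level_eq_neg_one (hB : IsFacetBasis V B)
    (hV : IsVertexConfiguration V) (hw : w ∈ V) (hlw : level B w = 0) (hwi : B.repr w i = -1)
    (hv : v ∈ V) (hlv : level B v = -1) : -1 ≤ B.repr v i := by
  obtain ⟨B', h, hB'i⟩ := hB.exists_isNeighbour_one_through hV hw hlw hwi
  have hlevel := h.level_eq v
  by_contra! hvi
  obtain ⟨j, rfl⟩ := h.isFacetBasis.exists_eq_of_level_pos hV hv (by linarith)
  by_cases hj : j = i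
  · rw [hj, hB'i, hlw] at hlv
    norm_num at hlv
  · rw [h.apply_of_ne j hj, level_self] at hlv
    norm_num at hlv

lemma card_filter_level_eq_one (hB : IsFacetBasis V B) :
    (V.filter fun v => level B v = 1).card = d := by
  have : V.filter (fun v => level B v = 1) = Finset.univ.map ⟨B, B.injective⟩ := by
    ext v
    simp only [Finset.mem_filter, Finset.mem_map, Finset.mem_univ, true_and,
      Function.Embedding.coeFn_mk]
    constructor
    · rintro ⟨hv, hl⟩
      exact (hB.exists_eq_of_level_eq_one v hv hl).imp fun i hi => hi.symm
    · rintro ⟨i, rfl⟩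
      exact ⟨hB.mem i, level_self B i⟩
  rw [this, Finset.card_map, Finset.card_univ, Fintype.card_fin]

lemma card_filter_level_eq_zero_le (hB : IsFacetBasis V B) (hV : IsVertexConfiguration V) :
    (V.filter fun v => level B v = 0).card ≤ d := by
  have h := Finset.card_le_card_of_forall_subsingleton (fun v i => B.repr v i < 0)
    (s := V.filter fun v => level B v = 0) (t := Finset.univ) ?_ ?_
  · simpa using h
  · intro v hv
    obtain ⟨hvV, hl⟩ := Finset.mem_filter.1 hv
    simpa using exists_repr_neg (ne_of_mem_of_not_mem hvV hV.zero_notMem) hl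
  · rintro i - v ⟨hv, hvi⟩ w ⟨hw, hwi⟩
    obtain ⟨hvV, hlv⟩ := Finset.mem_filter.1 hv
    obtain ⟨hwV, hlw⟩ := Finset.mem_filter.1 hw
    exact hB.eq_of_repr_neg hV hvV hlv hvi hwV hlw hwi

end IsFacetBasis

end Neighbours

section Counting

variable {d : ℕ} {V : Finset (Fin d → ℝ)} {B : Module.Basis (Fin d) ℝ (Fin d → ℝ)}
  {v w : Fin d → ℝ}

namespace IsFacetBasis

-- Each summand equals `2 [l = 1] + [l = 0] - l - 1` with `l = level B v`, and levels sum to zero.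
lemma sum_max_zero_neg_one_sub_level (hB : IsFacetBasis V B) (hV : IsVertexConfiguration V) :
    ∑ v ∈ V, max 0 (-1 - level B v) = (V.filter fun v => level B v = 0).card + 1 - d := by
  have hterm : ∀ v ∈ V, max 0 (-1 - level B v) =
      2 * (if level B v = 1 then 1 else 0) + (if level B v = 0 then 1 else 0) - level B v - 1 := by
    intro v hv
    rcases hB.level_cases hV hv with h | h | h
    · norm_num [h]
    · norm_num [h]
    · rw [max_eq_right (by linarith), if_neg (by linarith), if_neg (by linarith)]
      ring
  have hlevel : ∑ v ∈ V, level B v = 0 := by rw [← map_sum, hV.sum_eq_zero, map_zero]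
  have hcard : (V.card : ℝ) + 1 = 3 * d := by exact_mod_cast hV.card_add_one
  rw [Finset.sum_congr rfl hterm]
  simp only [Finset.sum_sub_distrib, Finset.sum_add_distrib, ← Finset.mul_sum, Finset.sum_boole,
    hlevel, hB.card_filter_level_eq_one, Finset.sum_const, nsmul_eq_mul]
  linarith

lemma sum_max_zero_neg_one_sub_level_le (hB : IsFacetBasis V B) (hV : IsVertexConfiguration V)
    {s : Finset (Fin d → ℝ)} (hs : s ⊆ V) : ∑ v ∈ s, max 0 (-1 - level B v) ≤ 1 := by
  have hle : ((V.filter fun v => level B v = 0).card : ℝ) ≤ d := by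
    exact_mod_cast hB.card_filter_level_eq_zero_le hV
  have := Finset.sum_le_sum_of_subset_of_nonneg (f := fun v => max 0 (-1 - level B v)) hs
    fun _ _ _ => le_max_left _ _
  rw [hB.sum_max_zero_neg_one_sub_level hV] at this
  linarith

lemma neg_two_le_level (hB : IsFacetBasis V B) (hV : IsVertexConfiguration V) (hv : v ∈ V) :
    -2 ≤ level B v := by
  have := hB.sum_max_zero_neg_one_sub_level_le hV (Finset.singleton_subset_iff.2 hv)
  rw [Finset.sum_singleton] at this
  linarith [le_max_right 0 (-1 - level B v)]

lemma level_eq_cases (hB : IsFacetBasis V B) (hV : IsVertexConfiguration V) (hv : v ∈ V) :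
    level B v = 1 ∨ level B v = 0 ∨ level B v = -1 ∨ level B v = -2 := by
  obtain ⟨n, hn⟩ := hB.exists_int_level v (hV.isLP v hv)
  have hle := hB.level_le_one v hv
  have hge := hB.neg_two_le_level hV hv
  rw [hn] at hle hge ⊢
  have : n = 1 ∨ n = 0 ∨ n = -1 ∨ n = -2 := by
    have : n ≤ 1 := by exact_mod_cast hle
    have : -2 ≤ n := by exact_mod_cast hge
    omega
  exact_mod_cast this

lemma eq_of_level_eq_neg_two (hB : IsFacetBasis V B) (hV : IsVertexConfiguration V)
    (hv : v ∈ V) (hw : w ∈ V) (hlv : level B v = -2) (hlw : level B w = -2) : v = w := by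
  classical
  by_contra hne
  have := hB.sum_max_zero_neg_one_sub_level_le hV (s := {v, w}) (by grind)
  norm_num [Finset.sum_pair hne, hlv, hlw] at this

lemma card_filter_level_eq_zero (hB : IsFacetBasis V B) (hV : IsVertexConfiguration V)
    (hv : v ∈ V) (hl : level B v = -2) : (V.filter fun v => level B v = 0).card = d := by
  refine (hB.card_filter_level_eq_zero_le hV).antisymm ?_
  have h := Finset.single_le_sum (f := fun v => max 0 (-1 - level B v))
    (fun _ _ => le_max_left _ _) hv
  rw [hB.sum_max_zero_neg_one_sub_level hV, hl] at h
  have hd : (d : ℝ) ≤ (V.filter fun v => level B v = 0).card := by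
    norm_num at h
    linarith
  exact_mod_cast hd

lemma card_filter_level_eq_zero_add_one (hB : IsFacetBasis V B) (hV : IsVertexConfiguration V)
    (hl : ∀ v ∈ V, -1 ≤ level B v) : (V.filter fun v => level B v = 0).card + 1 = d := by
  have h := hB.sum_max_zero_neg_one_sub_level hV
  rw [Finset.sum_eq_zero fun v hv => max_eq_left (by linarith [hl v hv])] at h
  have hd : ((V.filter fun v => level B v = 0).card : ℝ) + 1 = d := by linarith
  exact_mod_cast hd

end IsFacetBasis

end Counting

section LatticeBasis

variable {d : ℕ} {V : Finset (Fin d → ℝ)} {B B' : Module.Basis (Fin d) ℝ (Fin d → ℝ)}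
  {v : Fin d → ℝ} {i : Fin d}

/-- `B` is a basis of the lattice `ℤ ^ d`. -/
def IsLatticeBasis (B : Module.Basis (Fin d) ℝ (Fin d → ℝ)) : Prop :=
  (∀ i, IsLP (B i)) ∧ ∀ v, IsLP v → ∀ i, ∃ n : ℤ, B.repr v i = n

lemma IsNeighbour.exists_int_repr (h : IsNeighbour V B B' i 1) (hB : IsFacetBasis V B)
    (hv : IsLP v) : ∃ n : ℤ, B.repr v i = n := by
  obtain ⟨m, hm⟩ := hB.exists_int_level v hv
  obtain ⟨n, hn⟩ := h.isFacetBasis.exists_int_level v hv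
  refine ⟨m - n, ?_⟩
  push_cast
  linarith [h.level_eq v]

lemma IsFacetBasis.exists_int_repr_of_forall_ne (hB : IsFacetBasis V B) (hv : IsLP v)
    (h : ∀ j ≠ i, ∃ n : ℤ, B.repr v j = n) : ∃ n : ℤ, B.repr v i = n := by
  obtain ⟨m, hm⟩ := hB.exists_int_level v hv
  choose! n hn using h
  refine ⟨m - ∑ j ∈ Finset.univ.erase i, n j, ?_⟩
  rw [level_apply, ← Finset.add_sum_erase _ _ (Finset.mem_univ i)] at hm
  push_cast
  rw [← hm, Finset.sum_congr rfl fun j hj => hn j (Finset.ne_of_mem_erase hj), add_sub_cancel_right]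

end LatticeBasis

section CentrallySymmetric

variable {d : ℕ} {V : Finset (Fin d → ℝ)} {B B' : Module.Basis (Fin d) ℝ (Fin d → ℝ)}
  {v w : Fin d → ℝ} {i : Fin d} {k : ℝ}

/-- The vertices that the index `i` contributes to the hexagon with vertices `±B i`, `±B (σ i)`,
`±(B i - B (σ i))`, for `σ` an involution. -/
def hexagonPart (B : Module.Basis (Fin d) ℝ (Fin d → ℝ)) (σ : Fin d → Fin d) (i : Fin d) :
    Set (Fin d → ℝ) :=
  {B i, -B i, B (σ i) - B i}

/-- `V` is the vertex set of a polytope splitting into the segment `[-B o, B o]` and, for each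
`2`-cycle `(i, j)` of the involution `σ`, the hexagon with vertices `±B i`, `±B j`,
`±(B i - B j)`. -/
structure IsHexagonsWithSegment (V : Finset (Fin d → ℝ)) (B : Module.Basis (Fin d) ℝ (Fin d → ℝ))
    (σ : Fin d → Fin d) (o : Fin d) : Prop where
  isLatticeBasis : IsLatticeBasis B
  involutive : Function.Involutive σ
  apply_eq_self_iff : ∀ i, σ i = i ↔ i = o
  coe_eq : (V : Set (Fin d → ℝ)) =
    {B o, -B o} ∪ ⋃ i ∈ ({o}ᶜ : Set (Fin d)), hexagonPart B σ i

/-- The set of indices of the negative coordinates of `w`. For distinct vertices of level `0`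
these sets are disjoint. -/
def negSupport (B : Module.Basis (Fin d) ℝ (Fin d → ℝ)) (w : Fin d → ℝ) : Finset (Fin d) :=
  Finset.univ.filter fun i => B.repr w i < 0

lemma mem_negSupport : i ∈ negSupport B w ↔ B.repr w i < 0 := by
  simp [negSupport]

lemma IsNeighbour.eq_one_of_neg_mem (h : IsNeighbour V B B' i k) (hV : IsVertexConfiguration V)
    (hneg : -B i ∈ V) (hl : level B (B' i) = 0) : k = 1 := by
  have hlevel : level B' (-B i) = k - 1 := by
    rw [h.level_eq, map_neg, level_self, map_neg, Finsupp.neg_apply, B.repr_self,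
      Finsupp.single_eq_same]
    ring
  rcases h.isFacetBasis.level_cases hV hneg with h1 | h0 | hlt
  · obtain ⟨j, hj⟩ := h.isFacetBasis.exists_eq_of_level_eq_one _ hneg h1
    have hBj : level B (B' j) = -1 := by rw [← hj, map_neg, level_self]
    by_cases hji : j = i
    · rw [hji, hl] at hBj
      norm_num at hBj
    · rw [h.apply_of_ne j hji, level_self] at hBj
      norm_num at hBj
  · linarith
  · linarith [h.one_le]

namespace IsFacetBasis

lemma exists_isNeighbour_one_of_neg_mem (hB : IsFacetBasis V B) (hV : IsVertexConfiguration V)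
    (hneg : -B i ∈ V) (hw : w ∈ V) (hl : level B w = 0) (hi : B.repr w i < 0) :
    ∃ B', IsNeighbour V B B' i 1 ∧ B' i = w := by
  obtain ⟨B', k, h, rfl⟩ := hB.exists_isNeighbour_through hV hw hl hi
  exact ⟨B', h.eq_one_of_neg_mem hV hneg hl ▸ h, rfl⟩

lemma repr_eq_neg_one_of_neg_mem (hB : IsFacetBasis V B) (hV : IsVertexConfiguration V)
    (hneg : -B i ∈ V) (hw : w ∈ V) (hl : level B w = 0) (hi : B.repr w i < 0) :
    B.repr w i = -1 := by
  obtain ⟨B', h, rfl⟩ := hB.exists_isNeighbour_one_of_neg_mem hV hneg hw hl hi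
  simpa using h.repr_self_mul hl

lemma exists_int_repr_of_neg_mem (hB : IsFacetBasis V B) (hV : IsVertexConfiguration V)
    (hneg : -B i ∈ V) (hw : w ∈ V) (hl : level B w = 0) (hi : B.repr w i < 0) (hv : IsLP v) :
    ∃ n : ℤ, B.repr v i = n := by
  obtain ⟨B', h, -⟩ := hB.exists_isNeighbour_one_of_neg_mem hV hneg hw hl hi
  exact h.exists_int_repr hB hv

lemma repr_mem_of_neg_mem (hB : IsFacetBasis V B) (hV : IsVertexConfiguration V)
    (hneg : ∀ v ∈ V, -v ∈ V) (hw : w ∈ V) (hl : level B w = 0) (i : Fin d) :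
    B.repr w i = -1 ∨ B.repr w i = 0 ∨ B.repr w i = 1 := by
  rcases lt_trichotomy (B.repr w i) 0 with h | h | h
  · exact .inl <| hB.repr_eq_neg_one_of_neg_mem hV (hneg _ (hB.mem i)) hw hl h
  · exact .inr <| .inl h
  · have := hB.repr_eq_neg_one_of_neg_mem hV (hneg _ (hB.mem i)) (hneg w hw) (by simpa using hl)
      (i := i) (by simpa using h)
    right; right
    simpa [neg_eq_iff_eq_neg] using this

lemma card_biUnion_negSupport (hB : IsFacetBasis V B) (hV : IsVertexConfiguration V) :
    ((V.filter fun v => level B v = 0).biUnion (negSupport B)).card =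
      ∑ w ∈ V.filter fun v => level B v = 0, (negSupport B w).card := by
  refine Finset.card_biUnion fun v hv w hw hne => Finset.disjoint_left.2 fun i hvi hwi => hne ?_
  obtain ⟨hvV, hlv⟩ := Finset.mem_filter.1 hv
  obtain ⟨hwV, hlw⟩ := Finset.mem_filter.1 hw
  exact hB.eq_of_repr_neg hV hvV hlv (mem_negSupport.1 hvi) hwV hlw (mem_negSupport.1 hwi)

lemma negSupport_nonempty (hV : IsVertexConfiguration V) (hw : w ∈ V) (hl : level B w = 0) :
    (negSupport B w).Nonempty :=
  (exists_repr_neg (ne_of_mem_of_not_mem hw hV.zero_notMem) hl).imp fun _ => mem_negSupport.2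

lemma card_negSupport_neg (hB : IsFacetBasis V B) (hV : IsVertexConfiguration V)
    (hneg : ∀ v ∈ V, -v ∈ V) (hw : w ∈ V) (hl : level B w = 0) :
    (negSupport B (-w)).card = (negSupport B w).card := by
  have hrepr : ∀ i, B.repr w i =
      (if B.repr (-w) i < 0 then 1 else 0) - (if B.repr w i < 0 then 1 else 0) := by
    intro i
    rcases hB.repr_mem_of_neg_mem hV hneg hw hl i with h | h | h <;> norm_num [h]
  rw [level_apply, Finset.sum_congr rfl fun i _ => hrepr i, Finset.sum_sub_distrib,
    Finset.sum_boole, Finset.sum_boole, sub_eq_zero] at hl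
  exact_mod_cast hl

-- There are `d - 1` vertices of level `0`, so at most one index is left once each of them is given
-- one; but `w` and `-w` have equally many.
lemma card_negSupport (hB : IsFacetBasis V B) (hV : IsVertexConfiguration V)
    (hneg : ∀ v ∈ V, -v ∈ V) (hw : w ∈ V) (hl : level B w = 0) : (negSupport B w).card = 1 := by
  have hone : ∀ v ∈ V.filter (fun v => level B v = 0), 1 ≤ (negSupport B v).card := fun v hv =>
    (negSupport_nonempty hV (Finset.mem_filter.1 hv).1 (Finset.mem_filter.1 hv).2).card_pos
  have hne : w ≠ -w := fun h => ne_of_mem_of_not_mem hw hV.zero_notMem (self_eq_neg.1 h)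
  have hsub : {w, -w} ⊆ V.filter fun v => level B v = 0 := by
    simp [Finset.insert_subset_iff, hw, hl, hneg w hw]
  have hle := Finset.sum_le_sum_of_subset_of_nonneg
    (f := fun v => ((negSupport B v).card : ℤ) - 1) hsub fun v hv _ => by
      have := hone v hv
      omega
  have hcard := hB.card_filter_level_eq_zero_add_one hV fun v hv => by
    simpa [neg_le] using hB.level_le_one _ (hneg v hv)
  have hunion := (hB.card_biUnion_negSupport hV).symm.trans_le (Finset.card_le_univ _)
  rw [Finset.sum_pair hne, hB.card_negSupport_neg hV hneg hw hl, Finset.sum_sub_distrib,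
    Finset.sum_const, nsmul_one, ← Nat.cast_sum] at hle
  rw [Fintype.card_fin] at hunion
  have := hone w (Finset.mem_filter.2 ⟨hw, hl⟩)
  omega

lemma exists_eq_sub_of_neg_mem (hB : IsFacetBasis V B) (hV : IsVertexConfiguration V)
    (hneg : ∀ v ∈ V, -v ∈ V) (hw : w ∈ V) (hl : level B w = 0) (hi : B.repr w i < 0) :
    ∃ j, w = B j - B i := by
  have hrepr := hB.repr_mem_of_neg_mem hV hneg hw hl
  have hint : ∀ j, ∃ n : ℤ, B.repr (w + B i) j = n := fun j => by
    rw [map_add, Finsupp.add_apply, B.repr_self, Finsupp.single_apply]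
    rcases hrepr j with h | h | h <;> split_ifs <;> rw [h]
    exacts [⟨0, by simp⟩, ⟨-1, by simp⟩, ⟨1, by simp⟩, ⟨0, by simp⟩, ⟨2, by norm_num⟩,
      ⟨1, by simp⟩]
  have hnonneg : ∀ j, 0 ≤ B.repr (w + B i) j := fun j => by
    rw [map_add, Finsupp.add_apply, B.repr_self, Finsupp.single_apply]
    split_ifs with hij
    · subst hij
      rcases hrepr i with h | h | h <;> norm_num [h]
    · by_contra! hj
      refine hij (Finset.card_le_one.1 (hB.card_negSupport hV hneg hw hl).le _ ?_ _ ?_)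
      exacts [mem_negSupport.2 hi, mem_negSupport.2 (by simpa using hj)]
  obtain ⟨j, hj⟩ := exists_eq_of_repr_nonneg hint hnonneg (by simp [hl])
  exact ⟨j, eq_sub_of_add_eq hj⟩

lemma exists_forall_repr_neg_iff (hB : IsFacetBasis V B) (hV : IsVertexConfiguration V)
    (hneg : ∀ v ∈ V, -v ∈ V) :
    ∃ o, ∀ i, (∃ w ∈ V, level B w = 0 ∧ B.repr w i < 0) ↔ i ≠ o := by
  set S := (V.filter fun v => level B v = 0).biUnion (negSupport B) with hS
  have hcard : S.card + 1 = d := by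
    rw [hS, hB.card_biUnion_negSupport hV, Finset.sum_congr rfl fun w hw =>
      hB.card_negSupport hV hneg (Finset.mem_filter.1 hw).1 (Finset.mem_filter.1 hw).2]
    rw [Finset.sum_const, smul_eq_mul, mul_one]
    exact hB.card_filter_level_eq_zero_add_one hV fun v hv => by
      simpa [neg_le] using hB.level_le_one _ (hneg v hv)
  obtain ⟨o, ho⟩ := Finset.card_eq_one.1 (show Sᶜ.card = 1 by
    rw [Finset.card_compl, Fintype.card_fin]
    omega)
  refine ⟨o, fun i => ?_⟩
  rw [Ne, ← Finset.mem_singleton, ← ho, Finset.mem_compl, not_not, hS]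
  simp [mem_negSupport, and_assoc]

lemma exists_involutive_sub_mem (hB : IsFacetBasis V B) (hV : IsVertexConfiguration V)
    (hneg : ∀ v ∈ V, -v ∈ V) :
    ∃ (σ : Fin d → Fin d) (o : Fin d), Function.Involutive σ ∧ (∀ i, σ i = i ↔ i = o) ∧
      (∀ i ≠ o, B (σ i) - B i ∈ V) ∧
      ∀ w ∈ V, level B w = 0 → ∃ i ≠ o, w = B (σ i) - B i := by
  obtain ⟨o, ho⟩ := hB.exists_forall_repr_neg_iff hV hneg
  have hex : ∀ i, ∃ j, (i = o → j = o) ∧ (i ≠ o → B j - B i ∈ V) := fun i => by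
    by_cases hi : i = o
    · exact ⟨o, by simp [hi]⟩
    · obtain ⟨w, hw, hl, hwi⟩ := (ho i).2 hi
      obtain ⟨j, rfl⟩ := hB.exists_eq_sub_of_neg_mem hV hneg hw hl hwi
      exact ⟨j, by simp [hi, hw]⟩
  choose σ hσo hσ using hex
  have hne : ∀ i ≠ o, σ i ≠ i := fun i hi h => by
    have := hσ i hi
    rw [h, sub_self] at this
    exact hV.zero_notMem this
  have hrepr : ∀ i ≠ o, B.repr (B (σ i) - B i) i < 0 := fun i hi => by
    simp [hne i hi]
  have huniq : ∀ w ∈ V, level B w = 0 → ∀ i, B.repr w i < 0 → i ≠ o ∧ w = B (σ i) - B i := by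
    intro w hw hl i hi
    have hio := (ho i).1 ⟨w, hw, hl, hi⟩
    exact ⟨hio, hB.eq_of_repr_neg hV hw hl hi (hσ i hio) (by simp) (hrepr i hio)⟩
  refine ⟨σ, o, fun i => ?_, fun i => ⟨fun h => ?_, ?_⟩, hσ, fun w hw hl => ?_⟩
  · by_cases hi : i = o
    · rw [hi, hσo o rfl, hσo o rfl]
    · have hmem := hneg _ (hσ i hi)
      rw [neg_sub] at hmem
      obtain ⟨-, h⟩ := huniq _ hmem (by simp) (σ i) (by simp [(hne i hi).symm])
      exact B.injective (sub_left_injective h).symm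
  · by_contra hi
    exact hne i hi h
  · rintro rfl
    exact hσo _ rfl
  · obtain ⟨i, hi⟩ := exists_repr_neg (ne_of_mem_of_not_mem hw hV.zero_notMem) hl
    exact ⟨i, huniq w hw hl i hi⟩

theorem exists_isHexagonsWithSegment (hB : IsFacetBasis V B) (hV : IsVertexConfiguration V)
    (hneg : ∀ v ∈ V, -v ∈ V) : ∃ σ o, IsHexagonsWithSegment V B σ o := by
  obtain ⟨σ, o, hσσ, hσo, hσ, hzero⟩ := hB.exists_involutive_sub_mem hV hneg
  have hint : ∀ v, IsLP v → ∀ i ≠ o, ∃ n : ℤ, B.repr v i = n := fun v hv i hi =>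
    hB.exists_int_repr_of_neg_mem hV (hneg _ (hB.mem i)) (hσ i hi) (by simp)
      (by simp [mt (hσo i).1 hi]) hv
  refine ⟨σ, o, ⟨fun i => hV.isLP _ (hB.mem i), fun v hv i => ?_⟩, hσσ, hσo, ?_⟩
  · by_cases hi : i = o
    · exact hB.exists_int_repr_of_forall_ne hv fun j hj => hint v hv j (hi ▸ hj)
    · exact hint v hv i hi
  · ext v
    simp only [Finset.mem_coe, Set.mem_union, Set.mem_iUnion, Set.mem_insert_iff,
      Set.mem_singleton_iff, Set.mem_compl_iff]
    refine ⟨fun hv => ?_, ?_⟩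
    · have hcase : (∃ i, v = B i ∨ v = -B i) ∨ ∃ i ≠ o, v = B (σ i) - B i := by
        rcases hB.level_cases hV hv with h | h | h
        · exact .inl ((hB.exists_eq_of_level_eq_one v hv h).imp fun _ => .inl)
        · exact .inr (hzero v hv h)
        · obtain ⟨i, hi⟩ := hB.exists_eq_of_level_pos hV (hneg v hv) (by
            rw [map_neg]
            linarith)
          exact .inl ⟨i, .inr (neg_eq_iff_eq_neg.1 hi)⟩
      rcases hcase with ⟨i, h⟩ | ⟨i, hi, h⟩
      · by_cases hi : i = o
        · exact .inl (hi ▸ h)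
        · exact .inr ⟨i, hi, h.imp_right .inl⟩
      · exact .inr ⟨i, hi, .inr (.inr h)⟩
    · rintro ((rfl | rfl) | ⟨i, hi, rfl | rfl | rfl⟩)
      exacts [hB.mem o, hneg _ (hB.mem o), hB.mem i, hneg _ (hB.mem i), hσ i hi]

end IsFacetBasis

end CentrallySymmetric

section DeepFacet

variable {d : ℕ} {V : Finset (Fin d → ℝ)} {B M : Module.Basis (Fin d) ℝ (Fin d → ℝ)}
  {F : Fin d → Module.Basis (Fin d) ℝ (Fin d → ℝ)} {k : Fin d → ℝ}
  {v z : Fin d → ℝ} {i j l : Fin d}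

/-- `B` is a deep facet: some vertex `z` lies at level `-2`, the lowest possible one. -/
structure IsDeepFacet (V : Finset (Fin d → ℝ)) (B : Module.Basis (Fin d) ℝ (Fin d → ℝ))
    (z : Fin d → ℝ) : Prop where
  isFacetBasis : IsFacetBasis V B
  mem : z ∈ V
  level_eq : level B z = -2

/-- A deep facet together with all its neighbours `F i` and the constants `k i`. -/
structure IsDeepStar (V : Finset (Fin d → ℝ)) (B : Module.Basis (Fin d) ℝ (Fin d → ℝ))
    (z : Fin d → ℝ) (F : Fin d → Module.Basis (Fin d) ℝ (Fin d → ℝ)) (k : Fin d → ℝ) : Prop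
    extends IsDeepFacet V B z where
  isNeighbour : ∀ i, IsNeighbour V B (F i) i (k i)

namespace IsDeepFacet

lemma exists_isDeepStar (h : IsDeepFacet V B z) (hV : IsVertexConfiguration V) :
    ∃ F k, IsDeepStar V B z F k := by
  choose F k hF using hV.exists_isNeighbour B h.isFacetBasis
  exact ⟨F, k, h, hF⟩

lemma repr_nonpos (h : IsDeepFacet V B z) (hV : IsVertexConfiguration V) (i : Fin d) :
    B.repr z i ≤ 0 := by
  obtain ⟨B', k, hN⟩ := hV.exists_isNeighbour B h.isFacetBasis i
  have hge := hN.isFacetBasis.neg_two_le_level hV h.mem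
  rw [hN.level_eq, h.level_eq] at hge
  nlinarith [hN.one_le]

lemma eq_of_level_eq_neg_two (h : IsDeepFacet V B z) (hV : IsVertexConfiguration V) (hv : v ∈ V)
    (hl : level B v = -2) : v = z :=
  h.isFacetBasis.eq_of_level_eq_neg_two hV hv h.mem hl h.level_eq

end IsDeepFacet

namespace IsDeepStar

lemma filter_level_eq_zero [DecidableEq (Fin d → ℝ)] (h : IsDeepStar V B z F k)
    (hV : IsVertexConfiguration V) :
    (V.filter fun v => level B v = 0) = Finset.univ.image fun i => F i i := by
  refine Finset.eq_of_subset_of_card_le (fun v hv => ?_) ?_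
  · obtain ⟨hvV, hl⟩ := Finset.mem_filter.1 hv
    obtain ⟨i, hi⟩ := exists_repr_neg (ne_of_mem_of_not_mem hvV hV.zero_notMem) hl
    exact Finset.mem_image.2 ⟨i, Finset.mem_univ i,
      (h.isNeighbour i).eq_of_level_eq_zero hV hvV hl hi⟩
  · rw [h.isFacetBasis.card_filter_level_eq_zero hV h.mem h.level_eq]
    simpa using Finset.card_image_le (s := Finset.univ) (f := fun i => F i i)

lemma mem_apply (h : IsDeepStar V B z F k) (i : Fin d) : F i i ∈ V :=
  (h.isNeighbour i).isFacetBasis.mem i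

lemma level_apply_eq_zero (h : IsDeepStar V B z F k) (hV : IsVertexConfiguration V) (i : Fin d) :
    level B (F i i) = 0 := by
  classical
  have : F i i ∈ V.filter fun v => level B v = 0 := by
    rw [h.filter_level_eq_zero hV]
    exact Finset.mem_image_of_mem _ (Finset.mem_univ i)
  exact (Finset.mem_filter.1 this).2

lemma exists_eq_apply (h : IsDeepStar V B z F k) (hV : IsVertexConfiguration V) (hv : v ∈ V)
    (hl : level B v = 0) : ∃ i, v = F i i := by
  classical
  have : v ∈ V.filter fun v => level B v = 0 := Finset.mem_filter.2 ⟨hv, hl⟩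
  rw [h.filter_level_eq_zero hV] at this
  obtain ⟨i, -, hi⟩ := Finset.mem_image.1 this
  exact ⟨i, hi.symm⟩

lemma apply_injective (h : IsDeepStar V B z F k) (hV : IsVertexConfiguration V) :
    Function.Injective fun i => F i i := by
  classical
  rw [← Set.injOn_univ, ← Finset.coe_univ, ← Finset.card_image_iff, ← h.filter_level_eq_zero hV,
    h.isFacetBasis.card_filter_level_eq_zero hV h.mem h.level_eq, Finset.card_univ,
    Fintype.card_fin]

lemma mul_repr_apply (h : IsDeepStar V B z F k) (hV : IsVertexConfiguration V) (i : Fin d) :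
    k i * B.repr (F i i) i = -1 :=
  (h.isNeighbour i).repr_self_mul (h.level_apply_eq_zero hV i)

lemma repr_apply_nonneg (h : IsDeepStar V B z F k) (hV : IsVertexConfiguration V) (hj : j ≠ i) :
    0 ≤ B.repr (F i i) j := by
  by_contra! hneg
  exact hj <| h.apply_injective hV <|
    (h.isNeighbour j).eq_of_level_eq_zero hV (h.mem_apply i) (h.level_apply_eq_zero hV i) hneg

lemma exists_repr_apply_pos (h : IsDeepStar V B z F k) (hV : IsVertexConfiguration V)
    (i : Fin d) : ∃ j ≠ i, 0 < B.repr (F i i) j := by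
  by_contra! hle
  have hzero : -F i i = 0 := by
    refine eq_zero_of_repr_nonneg (B := B) (fun j => ?_) (by simp [h.level_apply_eq_zero hV])
    rw [map_neg, Finsupp.neg_apply, neg_nonneg]
    by_cases hj : j = i
    · subst hj
      exact ((h.isNeighbour j).repr_neg h.isFacetBasis).le
    · exact hle j hj
  exact hV.zero_notMem (neg_eq_zero.1 hzero ▸ h.mem_apply i)

lemma const_eq_one_or_two (h : IsDeepStar V B z F k) (hV : IsVertexConfiguration V) (i : Fin d) :
    k i = 1 ∨ k i = 2 := by
  have hlevel := (h.isNeighbour i).level_eq (B i)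
  rw [level_self, B.repr_self, Finsupp.single_eq_same] at hlevel
  have hone := (h.isNeighbour i).one_le
  rcases (h.isNeighbour i).isFacetBasis.level_eq_cases hV (h.isFacetBasis.mem i) with
    h' | h' | h' | h'
  · linarith
  · left; linarith
  · right; linarith
  · obtain ⟨j, hj, hpos⟩ := h.exists_repr_apply_pos hV i
    have hdeep : IsDeepFacet V (F i) (B i) :=
      ⟨(h.isNeighbour i).isFacetBasis, h.isFacetBasis.mem i, h'⟩
    have := hdeep.repr_nonpos hV j
    rw [(h.isNeighbour i).repr_of_ne (h.level_apply_eq_zero hV i) _ hj, B.repr_self,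
      Finsupp.single_eq_same, Finsupp.single_eq_of_ne hj] at this
    nlinarith

lemma level_apply_apply (h : IsDeepStar V B z F k) (hV : IsVertexConfiguration V) (i j : Fin d) :
    level (F i) (F j j) = -(k i * B.repr (F j j) i) := by
  rw [(h.isNeighbour i).level_eq, h.level_apply_eq_zero hV, zero_sub]

lemma mul_repr_apply_cases (h : IsDeepStar V B z F k) (hV : IsVertexConfiguration V)
    (hj : j ≠ i) : k i * B.repr (F j j) i = 0 ∨ k i * B.repr (F j j) i = 1 ∨
      k i * B.repr (F j j) i = 2 := by
  have hnonneg : 0 ≤ k i * B.repr (F j j) i :=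
    mul_nonneg (by linarith [(h.isNeighbour i).one_le]) (h.repr_apply_nonneg hV hj.symm)
  have hlevel := (h.isNeighbour i).isFacetBasis.level_eq_cases hV (h.mem_apply j)
  rw [h.level_apply_apply hV] at hlevel
  rcases hlevel with h' | h' | h' | h'
  · linarith
  · left; linarith
  · right; left; linarith
  · right; right; linarith

-- If the value were `2`, the vertex `F j j` would lie at level `-2` over `F i`, so that `F i i`
-- would have no positive coordinate besides the `j`-th.
lemma mul_repr_apply_eq_zero_or_one (h : IsDeepStar V B z F k) (hV : IsVertexConfiguration V)
    (hj : j ≠ i) : k i * B.repr (F j j) i = 0 ∨ k i * B.repr (F j j) i = 1 := by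
  rcases h.mul_repr_apply_cases hV hj with h0 | h1 | h2
  · exact .inl h0
  · exact .inr h1
  exfalso
  have hdeep : IsDeepFacet V (F i) (F j j) :=
    ⟨(h.isNeighbour i).isFacetBasis, h.mem_apply j, by rw [h.level_apply_apply hV, h2]⟩
  have hle : ∀ m ≠ i, B.repr (F j j) m + 2 * B.repr (F i i) m ≤ 0 := fun m hm => by
    have := hdeep.repr_nonpos hV m
    rwa [(h.isNeighbour i).repr_of_ne (h.level_apply_eq_zero hV i) _ hm, h2] at this
  have hsupp : ∀ m, m ≠ i ∧ m ≠ j → B.repr (F i i) m = 0 := fun m hm => by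
    linarith [hle m hm.1, h.repr_apply_nonneg hV hm.1, h.repr_apply_nonneg hV hm.2]
  have hsum : B.repr (F i i) i + B.repr (F i i) j = 0 := by
    rw [← Fintype.sum_eq_add i j hj.symm hsupp, ← level_apply, h.level_apply_eq_zero hV]
  have hi := (h.isNeighbour i).repr_neg h.isFacetBasis
  have hone := (h.isNeighbour j).one_le
  have hpos : 0 < k j * B.repr (F i i) j := mul_pos (by linarith) (by linarith)
  have hhalf : k j * B.repr (F i i) j ≤ 1 / 2 := by
    nlinarith [hle j hj, h.mul_repr_apply hV j]
  rcases h.mul_repr_apply_cases hV hj.symm with h' | h' | h' <;> linarith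

lemma exists_eq_half_smul_sub (h : IsDeepStar V B z F k) (hV : IsVertexConfiguration V)
    (hi : k i = 2) : ∃ l ≠ i, k l = 2 ∧ F i i = (1 / 2 : ℝ) • (B l - B i) := by
  obtain ⟨l, hl, hpos⟩ := h.exists_repr_apply_pos hV i
  have hrepr : B.repr (F i i) i = -1 / 2 := by
    linarith [hi ▸ h.mul_repr_apply hV i]
  have hsum : ∑ m ∈ {i, l}ᶜ, B.repr (F i i) m + B.repr (F i i) i + B.repr (F i i) l = 0 := by
    rw [add_assoc, ← Finset.sum_pair hl.symm, Finset.sum_compl_add_sum, ← level_apply,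
      h.level_apply_eq_zero hV]
  have hle : B.repr (F i i) l ≤ 1 / 2 := by
    have : 0 ≤ ∑ m ∈ {i, l}ᶜ, B.repr (F i i) m :=
      Finset.sum_nonneg fun m hm => h.repr_apply_nonneg hV (by rintro rfl; simp at hm)
    linarith
  have hmul : k l * B.repr (F i i) l = 1 :=
    (h.mul_repr_apply_eq_zero_or_one hV hl.symm).resolve_left
      (mul_pos (by linarith [(h.isNeighbour l).one_le]) hpos).ne'
  have hkl : k l = 2 := (h.const_eq_one_or_two hV l).resolve_left fun hk => by
    rw [hk] at hmul
    linarith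
  have hrepr_l : B.repr (F i i) l = 1 / 2 := by
    rw [hkl] at hmul
    linarith
  refine ⟨l, hl, hkl, sub_eq_zero.1 <| eq_zero_of_repr_nonneg (B := B) (fun m => ?_) ?_⟩
  · by_cases hmi : m = i
    · subst hmi
      norm_num [hrepr, hl]
    · by_cases hml : m = l
      · subst hml
        simp [hrepr_l, hmi]
      · simpa [hmi, hml, Ne.symm] using h.repr_apply_nonneg hV hmi
  · simp [h.level_apply_eq_zero hV]

lemma repr_of_half (h : IsDeepStar V B z F k) (hV : IsVertexConfiguration V) (hi : k i = 2)
    (hl : l ≠ i) (hFi : F i i = (1 / 2 : ℝ) • (B l - B i)) (v : Fin d → ℝ) :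
    (F i).repr v l = B.repr v l + B.repr v i := by
  rw [(h.isNeighbour i).repr_of_ne (h.level_apply_eq_zero hV i) v hl, hi, hFi]
  simp only [map_smul, map_sub, Module.Basis.repr_self, Finsupp.smul_apply, Finsupp.sub_apply,
    Finsupp.single_eq_same, Finsupp.single_eq_of_ne hl, smul_eq_mul]
  ring

lemma exists_half_pair (h : IsDeepStar V B z F k) (hV : IsVertexConfiguration V) (hi : k i = 2) :
    ∃ l ≠ i, k l = 2 ∧ F i i = (1 / 2 : ℝ) • (B l - B i) ∧ F l l = (1 / 2 : ℝ) • (B i - B l) := by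
  obtain ⟨l, hl, hkl, hFi⟩ := h.exists_eq_half_smul_sub hV hi
  obtain ⟨m, hm, -, hFl⟩ := h.exists_eq_half_smul_sub hV hkl
  refine ⟨l, hl, hkl, hFi, ?_⟩
  by_cases hmi : m = i
  · rw [hFl, hmi]
  exfalso
  have hlevel : level (F i) (F l l) = 0 := by
    rw [h.level_apply_apply hV, hFl]
    simp [hl, hmi]
  have hreprFl : (F i).repr (F l l) l = -1 / 2 := by
    rw [h.repr_of_half hV hi hl hFi, hFl]
    norm_num [hl, hm, hmi]
  obtain ⟨M, c, hM, hMl⟩ := (h.isNeighbour i).isFacetBasis.exists_isNeighbour_through hV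
    (h.mem_apply l) hlevel (by rw [hreprFl]; norm_num)
  have hc := hM.repr_self_mul (by rw [hMl, hlevel])
  rw [hMl, hreprFl] at hc
  have hge := hM.isFacetBasis.neg_two_le_level hV (h.isFacetBasis.mem i)
  rw [hM.level_eq, h.repr_of_half hV hi hl hFi, (h.isNeighbour i).level_eq, hi] at hge
  rw [level_self, B.repr_self, Finsupp.single_eq_same, Finsupp.single_eq_of_ne hl] at hge
  linarith

lemma exists_isDeepFacet_of_half (h : IsDeepStar V B z F k) (hV : IsVertexConfiguration V)
    (hi : k i = 2) (hl : l ≠ i) (hFi : F i i = (1 / 2 : ℝ) • (B l - B i)) :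
    ∃ M, IsNeighbour V (F i) M l 1 ∧ IsDeepFacet V M (B i) ∧
      ∀ v, level M v = level B v - 3 * B.repr v i - B.repr v l := by
  obtain ⟨M, c, hM⟩ := hV.exists_isNeighbour _ (h.isNeighbour i).isFacetBasis l
  have hlevel : ∀ v, level M v =
      level B v - 2 * B.repr v i - c * (B.repr v l + B.repr v i) := fun v => by
    rw [hM.level_eq, (h.isNeighbour i).level_eq, hi, h.repr_of_half hV hi hl hFi]
  have hc : c = 1 := by
    have hge := hM.isFacetBasis.neg_two_le_level hV (h.isFacetBasis.mem i)
    simp only [hlevel, level_self, B.repr_self, Finsupp.single_eq_same,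
      Finsupp.single_eq_of_ne hl] at hge
    linarith [hM.one_le]
  subst hc
  refine ⟨M, hM, ⟨hM.isFacetBasis, h.isFacetBasis.mem i, ?_⟩, fun v => ?_⟩
  · simp [hlevel, hl]
  · rw [hlevel]
    ring

-- If the constant of `M` at `l` were `2`, then `-B l` would be a vertex, which forces `k l = 1`.
lemma repr_eq_neg_one_of_half (h : IsDeepStar V B z F k) (hV : IsVertexConfiguration V)
    (hi : k i = 2) (hkl : k l = 2) (hl : l ≠ i) (hFi : F i i = (1 / 2 : ℝ) • (B l - B i))
    (hM : IsNeighbour V (F i) M l 1) (hMi : IsDeepFacet V M (B i)) (hlevel : level M (B l) = 0) :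
    M.repr (B l) l = -1 := by
  have hneg : M.repr (B l) l < 0 := by
    have hmul := repr_self_of_agree_off hM.apply_of_ne (B l)
    have := hM.repr_neg (h.isNeighbour i).isFacetBasis
    rw [h.repr_of_half hV hi hl hFi] at hmul
    rw [B.repr_self, Finsupp.single_eq_same, Finsupp.single_eq_of_ne hl.symm, add_zero] at hmul
    nlinarith
  obtain ⟨G, c, hG⟩ := hMi.exists_isDeepStar hV
  have hGl : G l l = B l := (hG.isNeighbour l).eq_of_level_eq_zero hV (h.isFacetBasis.mem l)
    hlevel hneg
  have hc := hG.mul_repr_apply hV l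
  rw [hGl] at hc
  rcases hG.const_eq_one_or_two hV l with h1 | h2
  · rw [h1] at hc
    linarith
  exfalso
  obtain ⟨m, -, -, hGll, hGm⟩ := hG.exists_half_pair hV h2
  have hmem : -B l ∈ V := by
    rw [← hGl, hGll, ← smul_neg, neg_sub, ← hGm]
    exact hG.mem_apply m
  have := (h.isNeighbour l).eq_one_of_neg_mem hV hmem (h.level_apply_eq_zero hV l)
  rw [hkl] at this
  norm_num at this

-- In coordinates with respect to `M`, the vertex `B i = B l - 2 M i` is nonpositive while `B l` is
-- nonnegative away from `l`.
lemma apply_eq_of_half (h : IsDeepStar V B z F k) (hV : IsVertexConfiguration V)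
    (hi : k i = 2) (hkl : k l = 2) (hl : l ≠ i) (hFi : F i i = (1 / 2 : ℝ) • (B l - B i))
    (hM : IsNeighbour V (F i) M l 1) (hMi : IsDeepFacet V M (B i)) (hlevel : level M (B l) = 0) :
    M l = -((1 / 2 : ℝ) • (B i + B l)) := by
  have hMl := h.repr_eq_neg_one_of_half hV hi hkl hl hFi hM hMi hlevel
  have hBi : B i = B l - (2 : ℝ) • M i := by
    rw [hM.apply_of_ne i hl.symm, hFi]
    module
  have hnonneg : ∀ m ≠ l, 0 ≤ M.repr (B l) m := fun m hm => by
    by_contra! hneg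
    obtain ⟨G, c, hG⟩ := hMi.exists_isDeepStar hV
    exact hm.symm <| hG.apply_injective hV <|
      ((hG.isNeighbour l).eq_of_level_eq_zero hV (h.isFacetBasis.mem l) hlevel (by
        rw [hMl]
        norm_num)).trans
      ((hG.isNeighbour m).eq_of_level_eq_zero hV (h.isFacetBasis.mem l) hlevel hneg).symm
  have hzero : B l + M l - M i = 0 := by
    refine eq_zero_of_repr_eq_zero_off (B := M) (i := i) (fun m hm => ?_) (by simp [hlevel])
    by_cases hml : m = l
    · simp [hml, hMl, hl]
    · have := hMi.repr_nonpos hV m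
      rw [hBi] at this
      rw [map_sub, map_smul, Finsupp.sub_apply, Finsupp.smul_apply, M.repr_self,
        Finsupp.single_eq_of_ne hm, smul_zero, sub_zero] at this
      simpa [hm, hml] using this.antisymm (hnonneg m hml)
  rw [show M l = M i - B l by linear_combination (exp := 1) hzero, hM.apply_of_ne i hl.symm, hFi]
  module

lemma exists_crossing_of_half (h : IsDeepStar V B z F k) (hV : IsVertexConfiguration V)
    (hi : k i = 2) (hkl : k l = 2) (hl : l ≠ i) (hFi : F i i = (1 / 2 : ℝ) • (B l - B i)) :
    ∃ M, IsDeepFacet V M (B i) ∧ (∀ v, level M v = level B v - 3 * B.repr v i - B.repr v l) ∧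
      (∀ j, level B (M j) ≠ -2) ∧ ∀ v, ∀ m ≠ i, m ≠ l → M.repr v m = B.repr v m := by
  obtain ⟨M, hM, hMi, hlevel⟩ := h.exists_isDeepFacet_of_half hV hi hl hFi
  have hMl := h.apply_eq_of_half hV hi hkl hl hFi hM hMi (by simp [hlevel, hl.symm])
  have hMii : M i = (1 / 2 : ℝ) • (B l - B i) := by rw [hM.apply_of_ne i hl.symm, hFi]
  have hMj : ∀ j ≠ i, j ≠ l → M j = B j := fun j hji hjl => by
    rw [hM.apply_of_ne j hjl, (h.isNeighbour i).apply_of_ne j hji]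
  refine ⟨M, hMi, hlevel, fun j => ?_, fun v m hmi hml => ?_⟩
  · by_cases hji : j = i
    · norm_num [hji, hMii]
    by_cases hjl : j = l
    · norm_num [hjl, hMl]
    · norm_num [hMj j hji hjl]
  · suffices M.coord m = B.coord m from LinearMap.congr_fun this v
    refine M.ext fun j => ?_
    rw [M.coord_apply, M.repr_self, B.coord_apply]
    by_cases hji : j = i
    · simp [hji, hMii, hmi, hml]
    by_cases hjl : j = l
    · simp [hjl, hMl, hmi, hml]
    · simp [hMj j hji hjl]

lemma three_mul_repr_add_repr_of_half (h : IsDeepStar V B z F k) (hV : IsVertexConfiguration V)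
    (hi : k i = 2) (hkl : k l = 2) (hl : l ≠ i) (hFi : F i i = (1 / 2 : ℝ) • (B l - B i)) :
    3 * B.repr z i + B.repr z l = -1 ∨ 3 * B.repr z i + B.repr z l = -2 := by
  obtain ⟨M, hMi, hlevel, hne, -⟩ := h.exists_crossing_of_half hV hi hkl hl hFi
  have hz := hlevel z
  rw [h.level_eq] at hz
  rcases hMi.isFacetBasis.level_eq_cases hV h.mem with h' | h' | h' | h'
  · obtain ⟨j, hj⟩ := hMi.isFacetBasis.exists_eq_of_level_eq_one _ h.mem h'
    exact absurd (hj ▸ h.level_eq) (hne j)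
  · right; linarith
  · left; linarith
  · have := h.level_eq
    rw [hMi.eq_of_level_eq_neg_two hV h.mem h', level_self] at this
    norm_num at this

lemma exists_int_two_mul_repr (h : IsDeepStar V B z F k) (hV : IsVertexConfiguration V)
    (hi : k i = 2) : ∃ n : ℤ, 2 * B.repr z i = n := by
  obtain ⟨n, hn⟩ := (h.isNeighbour i).isFacetBasis.exists_int_level z (hV.isLP z h.mem)
  rw [(h.isNeighbour i).level_eq, h.level_eq, hi] at hn
  exact ⟨-n - 2, by push_cast; linarith⟩

lemma repr_of_half_pair (h : IsDeepStar V B z F k) (hV : IsVertexConfiguration V)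
    (hi : k i = 2) (hkl : k l = 2) (hl : l ≠ i) (hFi : F i i = (1 / 2 : ℝ) • (B l - B i))
    (hFl : F l l = (1 / 2 : ℝ) • (B i - B l)) :
    B.repr z i = -1 / 2 ∧ B.repr z l = -1 / 2 := by
  obtain ⟨m, hm⟩ := h.exists_int_two_mul_repr hV hi
  obtain ⟨n, hn⟩ := h.exists_int_two_mul_repr hV hkl
  have hm0 : m ≤ 0 := by exact_mod_cast (show (m : ℝ) ≤ 0 by linarith [h.repr_nonpos hV i])
  have hn0 : n ≤ 0 := by exact_mod_cast (show (n : ℝ) ≤ 0 by linarith [h.repr_nonpos hV l])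
  have hmn : 3 * m + n = -2 ∨ 3 * m + n = -4 := by
    rify
    exact (h.three_mul_repr_add_repr_of_half hV hi hkl hl hFi).imp
      (fun h => by linarith) fun h => by linarith
  have hnm : 3 * n + m = -2 ∨ 3 * n + m = -4 := by
    rify
    exact (h.three_mul_repr_add_repr_of_half hV hkl hi hl.symm hFl).imp
      (fun h => by linarith) fun h => by linarith
  obtain ⟨rfl, rfl⟩ : m = -1 ∧ n = -1 := by omega
  push_cast at hm hn
  exact ⟨by linarith, by linarith⟩

lemma repr_apply_eq_zero_or_half (h : IsDeepStar V B z F k) (hV : IsVertexConfiguration V)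
    (hi : k i = 2) (hj : j ≠ i) : B.repr (F j j) i = 0 ∨ B.repr (F j j) i = 1 / 2 := by
  have := h.mul_repr_apply_eq_zero_or_one hV hj
  rw [hi] at this
  exact this.imp (fun h => by linarith) fun h => by linarith

lemma level_crossing_apply_eq_zero (h : IsDeepStar V B z F k) (hV : IsVertexConfiguration V)
    (hi : k i = 2) (hkl : k l = 2) (hM : IsDeepFacet V M (B i))
    (hlevel : ∀ v, level M v = level B v - 3 * B.repr v i - B.repr v l) (hji : j ≠ i)
    (hjl : j ≠ l) : level M (F j j) = 0 := by
  have hFj := hlevel (F j j)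
  rw [h.level_apply_eq_zero hV] at hFj
  rcases hM.isFacetBasis.level_eq_cases hV (h.mem_apply j) with h' | h' | h' | h'
  · linarith [h.repr_apply_nonneg hV hji.symm, h.repr_apply_nonneg hV hjl.symm]
  · exact h'
  · rcases h.repr_apply_eq_zero_or_half hV hi hji with hp | hp <;>
      rcases h.repr_apply_eq_zero_or_half hV hkl hjl with hq | hq <;> linarith
  · have := h.level_apply_eq_zero hV j
    rw [hM.eq_of_level_eq_neg_two hV (h.mem_apply j) h', level_self] at this
    norm_num at this

-- A pair `i, l` with constants `2` accounts for only half of the level `-2` of `z`, so `z` has a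
-- further negative coordinate `j`; crossing `i` and then `l` yields a facet over which both `z` and
-- `F j j` have level `0`.
theorem const_eq_one (h : IsDeepStar V B z F k) (hV : IsVertexConfiguration V) (i : Fin d) :
    k i = 1 := by
  refine (h.const_eq_one_or_two hV i).resolve_right fun hi => ?_
  obtain ⟨l, hl, hkl, hFi, hFl⟩ := h.exists_half_pair hV hi
  obtain ⟨hzi, hzl⟩ := h.repr_of_half_pair hV hi hkl hl hFi hFl
  obtain ⟨M, hM, hlevel, -, hrepr⟩ := h.exists_crossing_of_half hV hi hkl hl hFi
  obtain ⟨j, hji, hjl, hzj⟩ : ∃ j, j ≠ i ∧ j ≠ l ∧ B.repr z j < 0 := by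
    by_contra! hnonneg
    have hsum := level_apply B z
    rw [Fintype.sum_eq_add i l hl.symm fun j hj =>
      (h.repr_nonpos hV j).antisymm (hnonneg j hj.1 hj.2), h.level_eq, hzi, hzl] at hsum
    norm_num at hsum
  have hMz : level M z = 0 := by
    rw [hlevel, h.level_eq, hzi, hzl]
    norm_num
  have hFjz : F j j = z := hM.isFacetBasis.eq_of_repr_neg hV (h.mem_apply j)
    (h.level_crossing_apply_eq_zero hV hi hkl hM hlevel hji hjl)
    (by rw [hrepr _ j hji hjl]; exact (h.isNeighbour j).repr_neg h.isFacetBasis)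
    h.mem hMz (by rwa [hrepr _ j hji hjl])
  have := h.level_apply_eq_zero hV j
  rw [hFjz, h.level_eq] at this
  norm_num at this

end IsDeepStar

end DeepFacet

section PairedFacet

variable {d : ℕ} {V : Finset (Fin d → ℝ)} {B C : Module.Basis (Fin d) ℝ (Fin d → ℝ)}
  {σ : Fin d → Fin d} {v w z : Fin d → ℝ} {a b i j p : Fin d}

/-- The facet `C` is the neighbour of the facet `B` in which `B i` is replaced by a vertex `w` of
level `0` with `i`-th coordinate `-1`. -/
structure IsFlip (V : Finset (Fin d → ℝ)) (B C : Module.Basis (Fin d) ℝ (Fin d → ℝ)) (i : Fin d)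
    (w : Fin d → ℝ) : Prop where
  isFacetBasis : IsFacetBasis V C
  apply_self : C i = w
  level_eq : ∀ v, level C v = level B v - B.repr v i
  repr_self : ∀ v, C.repr v i = -B.repr v i
  repr_of_ne : ∀ v, ∀ j ≠ i, C.repr v j = B.repr v j + B.repr v i * B.repr w j

lemma IsFacetBasis.exists_isFlip (hB : IsFacetBasis V B) (hV : IsVertexConfiguration V)
    (hw : w ∈ V) (hl : level B w = 0) (hi : B.repr w i = -1) : ∃ C, IsFlip V B C i w := by
  obtain ⟨C, h, rfl⟩ := hB.exists_isNeighbour_one_through hV hw hl hi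
  exact ⟨C, h.isFacetBasis, rfl, fun v => by rw [h.level_eq, one_mul],
    fun v => by rw [h.repr_self hl, one_mul],
    fun v j hj => by rw [h.repr_of_ne hl v hj, one_mul]⟩

/-- `B` is a deep facet whose vertices of level `0` are the differences `B (σ i) - B i`. -/
structure IsPairedFacet (V : Finset (Fin d → ℝ)) (B : Module.Basis (Fin d) ℝ (Fin d → ℝ))
    (z : Fin d → ℝ) (σ : Fin d → Fin d) : Prop extends IsDeepFacet V B z where
  isLatticeBasis : IsLatticeBasis B
  apply_ne : ∀ i, σ i ≠ i
  sub_mem : ∀ i, B (σ i) - B i ∈ V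
  exists_eq_sub : ∀ v ∈ V, level B v = 0 → ∃ i, v = B (σ i) - B i

theorem IsDeepFacet.exists_isPairedFacet (h : IsDeepFacet V B z) (hV : IsVertexConfiguration V) :
    ∃ σ, IsPairedFacet V B z σ := by
  obtain ⟨F, k, hF⟩ := h.exists_isDeepStar hV
  have hN : ∀ i, IsNeighbour V B (F i) i 1 := fun i => hF.const_eq_one hV i ▸ hF.isNeighbour i
  have hB : IsLatticeBasis B := ⟨fun i => hV.isLP _ (h.isFacetBasis.mem i), fun v hv i =>
    (hN i).exists_int_repr h.isFacetBasis hv⟩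
  have hex : ∀ i, ∃ j, F i i + B i = B j := fun i => by
    have hLP : IsLP (F i i + B i) := fun m => by
      obtain ⟨p, hp⟩ := hV.isLP _ (hF.mem_apply i) m
      obtain ⟨q, hq⟩ := hB.1 i m
      exact ⟨p + q, by simp [hp, hq]⟩
    refine exists_eq_of_repr_nonneg (hB.2 _ hLP) (fun j => ?_) (by
      simp [hF.level_apply_eq_zero hV i])
    by_cases hj : j = i
    · have := (hN i).repr_self_mul (hF.level_apply_eq_zero hV i)
      subst hj
      rw [map_add, Finsupp.add_apply, B.repr_self, Finsupp.single_eq_same]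
      linarith
    · simpa [hj] using hF.repr_apply_nonneg hV hj
  choose σ hσ using hex
  have hF' : ∀ i, F i i = B (σ i) - B i := fun i => eq_sub_of_add_eq (hσ i)
  refine ⟨σ, h, hB, fun i hi => ?_, fun i => hF' i ▸ hF.mem_apply i, fun v hv hl => ?_⟩
  · have := hF.mem_apply i
    rw [hF' i, hi, sub_self] at this
    exact hV.zero_notMem this
  · exact (hF.exists_eq_apply hV hv hl).imp fun i hi => hi.trans (hF' i)

namespace IsPairedFacet

lemma exists_isFlip (h : IsPairedFacet V B z σ) (hV : IsVertexConfiguration V) (i : Fin d) :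
    ∃ C, IsFlip V B C i (B (σ i) - B i) :=
  h.isFacetBasis.exists_isFlip hV (h.sub_mem i) (by simp) (by simp [h.apply_ne i])

lemma exists_eq_neg_sub (h : IsPairedFacet V B z σ) (hV : IsVertexConfiguration V) :
    ∃ a b, a ≠ b ∧ z = -B a - B b := by
  have hint : ∀ i, ∃ n : ℤ, B.repr (-z) i = n := fun i => by
    obtain ⟨n, hn⟩ := h.isLatticeBasis.2 z (hV.isLP z h.mem) i
    exact ⟨-n, by simp [hn]⟩
  obtain ⟨a, ha⟩ := exists_repr_sub_nonneg hint (fun i => by simpa using h.repr_nonpos hV i)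
    (by simp [h.level_eq])
  have hint' : ∀ i, ∃ n : ℤ, B.repr (-z - B a) i = n := fun i => by
    obtain ⟨n, hn⟩ := hint i
    by_cases hi : i = a
    · exact ⟨n - 1, by rw [map_sub, Finsupp.sub_apply, hn, hi]; simp⟩
    · exact ⟨n, by rw [map_sub, Finsupp.sub_apply, hn]; simp [hi]⟩
  obtain ⟨b, hb⟩ := exists_eq_of_repr_nonneg hint' ha (by
    rw [map_sub, map_neg, h.level_eq, level_self]
    norm_num)
  have hz : z = -B a - B b := by rw [← hb]; abel
  refine ⟨a, b, ?_, hz⟩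
  rintro rfl
  obtain ⟨C, hC⟩ := h.exists_isFlip hV a
  have hlevel : level C z = 0 := by
    rw [hC.level_eq, h.level_eq, hz]
    norm_num
  have := hC.isFacetBasis.neg_one_le_repr hV h.mem hlevel (σ a)
  rw [hC.repr_of_ne _ _ (h.apply_ne a), hz] at this
  norm_num [h.apply_ne a, (h.apply_ne a).symm] at this

lemma eq_of_repr_eq_neg_one (h : IsPairedFacet V B z σ) (hV : IsVertexConfiguration V)
    (hv : v ∈ V) (hl : level B v = -1) (hi : B.repr v i = -1) (hj : B.repr v j = -1) : i = j := by
  by_contra hij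
  have hσ : ∀ {i j}, B.repr v i = -1 → B.repr v j = -1 → σ i ≠ j := by
    rintro i j hi hj rfl
    obtain ⟨C, hC⟩ := h.exists_isFlip hV i
    have := hC.isFacetBasis.neg_one_le_repr hV hv (by rw [hC.level_eq, hl, hi]; norm_num) (σ i)
    rw [hC.repr_of_ne _ _ (h.apply_ne i), hi, hj] at this
    norm_num [h.apply_ne i, (h.apply_ne i).symm] at this
  obtain ⟨C, hC⟩ := h.exists_isFlip hV i
  have hv' : v = B (σ j) - B j := by
    refine hC.isFacetBasis.eq_of_repr_neg hV (i := j) hv ?_ ?_ (h.sub_mem j) ?_ ?_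
    · rw [hC.level_eq, hl, hi]
      norm_num
    · rw [hC.repr_of_ne _ _ (Ne.symm hij), hi, hj]
      simp [hσ hi hj, hij, Ne.symm]
    · simp [hC.level_eq, hσ hj hi, hij, Ne.symm]
    · rw [hC.repr_of_ne _ _ (Ne.symm hij)]
      simp [hσ hj hi, h.apply_ne, hij, Ne.symm]
  rw [hv'] at hl
  norm_num at hl

lemma eq_neg_of_level_eq_neg_one (h : IsPairedFacet V B z σ) (hV : IsVertexConfiguration V)
    (hv : v ∈ V) (hl : level B v = -1) : ∃ i, v = -B i := by
  have hge : ∀ i, -1 ≤ B.repr v i := fun i =>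
    h.isFacetBasis.neg_one_le_repr_of_level_eq_neg_one hV (h.sub_mem i) (by simp)
      (by simp [h.apply_ne i]) hv hl
  have hneg : ∀ i, B.repr v i < 0 → B.repr v i = -1 := fun i hi => by
    obtain ⟨n, hn⟩ := h.isLatticeBasis.2 v (hV.isLP v hv) i
    have hge := hge i
    rw [hn] at hi hge ⊢
    have : n < 0 := by exact_mod_cast hi
    have : -1 ≤ n := by exact_mod_cast hge
    have : n = -1 := by omega
    simp [this]
  obtain ⟨i, hi⟩ : ∃ i, B.repr v i < 0 := by
    by_contra! hnonneg
    have := Finset.sum_nonneg fun i (_ : i ∈ Finset.univ) => hnonneg i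
    rw [← level_apply, hl] at this
    norm_num at this
  refine ⟨i, eq_neg_of_add_eq_zero_left <| eq_zero_of_repr_nonneg (B := B) (fun j => ?_) ?_⟩
  · by_cases hj : j = i
    · simp [hj, hneg i hi]
    · by_contra! hneg_j
      simp only [map_add, Module.Basis.repr_self, Finsupp.add_apply, Finsupp.single_apply,
        Ne.symm hj, if_false, add_zero] at hneg_j
      exact hj (h.eq_of_repr_eq_neg_one hV hv hl (hneg j hneg_j) (hneg i hi))
  · simp [hl]

lemma mem_cases (h : IsPairedFacet V B z σ) (hV : IsVertexConfiguration V) (hv : v ∈ V) :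
    (∃ i, v = B i) ∨ (∃ i, v = B (σ i) - B i) ∨ (∃ i, v = -B i) ∨ v = z := by
  rcases h.isFacetBasis.level_eq_cases hV hv with hl | hl | hl | hl
  · exact .inl <| h.isFacetBasis.exists_eq_of_level_eq_one v hv hl
  · exact .inr <| .inl <| h.exists_eq_sub v hv hl
  · exact .inr <| .inr <| .inl <| h.eq_neg_of_level_eq_neg_one hV hv hl
  · exact .inr <| .inr <| .inr <| h.eq_of_level_eq_neg_two hV hv hl

lemma apply_apply_of_repr_eq_zero (h : IsPairedFacet V B z σ) (hV : IsVertexConfiguration V)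
    (hp : B.repr z (σ p) = 0) : σ (σ p) = p := by
  obtain ⟨C, hC⟩ := h.exists_isFlip hV (σ p)
  have hdeep : IsDeepFacet V C z :=
    ⟨hC.isFacetBasis, h.mem, by rw [hC.level_eq, h.level_eq, hp, sub_zero]⟩
  obtain ⟨τ, hτ⟩ := hdeep.exists_isPairedFacet hV
  obtain ⟨j, hj⟩ := hτ.eq_neg_of_level_eq_neg_one hV (h.sub_mem p) (by
    simp [hC.level_eq, (h.apply_ne p).symm])
  have hjp : j = σ p := by
    by_contra hne
    have := congrArg (fun x => C.repr x (σ p)) hj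
    simp [hC.repr_self, (h.apply_ne p).symm, Ne.symm hne] at this
  rw [hjp, hC.apply_self, neg_sub] at hj
  exact B.injective (sub_right_injective hj).symm

lemma apply_apply_of_neg_mem (h : IsPairedFacet V B z σ) (hV : IsVertexConfiguration V)
    (hi : -B i ∈ V) : σ (σ i) = i := by
  by_contra hne
  obtain ⟨C, hC⟩ := h.exists_isFlip hV i
  have heq : -B i = B (σ (σ i)) - B (σ i) := by
    refine hC.isFacetBasis.eq_of_repr_neg hV (i := σ i) hi ?_ ?_ (h.sub_mem _) ?_ ?_
    · simp [hC.level_eq]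
    · simp [hC.repr_of_ne _ _ (h.apply_ne i), h.apply_ne]
    · simp [hC.level_eq, hne, h.apply_ne i]
    · simp [hC.repr_of_ne _ _ (h.apply_ne i), h.apply_ne, hne]
  have := congrArg (level B) heq
  norm_num at this

lemma apply_eq_of_apply_eq (h : IsPairedFacet V B z σ) (hV : IsVertexConfiguration V)
    (hz : z = -B a - B b) (hab : a ≠ b) (hba : σ b = a) : σ a = b := by
  by_contra hne
  obtain ⟨C, hC⟩ := h.exists_isFlip hV b
  rw [hba] at hC
  have hlevel : level C z = -1 := by
    rw [hC.level_eq, h.level_eq, hz]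
    norm_num [hab]
  have := hC.isFacetBasis.neg_one_le_repr_of_level_eq_neg_one hV (h.sub_mem a) (i := a)
    (by simp [hC.level_eq, hne, hab])
    (by simp [hC.repr_of_ne _ _ hab, hne, hab, h.apply_ne]) h.mem hlevel
  rw [hC.repr_of_ne _ _ hab, hz] at this
  norm_num [hab, hab.symm] at this

lemma repr_eq_zero (hz : z = -B a - B b) (ha : i ≠ a) (hb : i ≠ b) : B.repr z i = 0 := by
  simp [hz, ha.symm, hb.symm]

lemma apply_ne_apply (h : IsPairedFacet V B z σ) (hV : IsVertexConfiguration V)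
    (hz : z = -B a - B b) (hab : a ≠ b) (hσ : σ a ≠ b) : σ b ≠ σ a := fun hba => hab <| by
  have h0 : B.repr z (σ a) = 0 := repr_eq_zero hz (h.apply_ne a) hσ
  rw [← h.apply_apply_of_repr_eq_zero hV h0, ← hba,
    h.apply_apply_of_repr_eq_zero hV (hba ▸ h0)]

-- Crossing from `B` at `a` and then at `σ a` would give a facet at which both `z` and
-- `B (σ b) - B b` have level `0` and a negative `b`-th coordinate.
lemma neg_notMem (h : IsPairedFacet V B z σ) (hV : IsVertexConfiguration V)
    (hz : z = -B a - B b) (hab : a ≠ b) : -B a ∉ V := by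
  intro hmem
  obtain ⟨C, hC⟩ := h.exists_isFlip hV a
  have hzl : level C z = -1 := by
    rw [hC.level_eq, h.level_eq, hz]
    norm_num [hab]
  have hal : level C (-B a) = 0 := by simp [hC.level_eq]
  have hac : C.repr (-B a) (σ a) = -1 := by
    simp [hC.repr_of_ne _ _ (h.apply_ne a), h.apply_ne]
  have hσab : σ a ≠ b := by
    rintro rfl
    have := hC.isFacetBasis.neg_one_le_repr_of_level_eq_neg_one hV hmem hal hac h.mem hzl
    rw [hC.repr_of_ne _ _ (h.apply_ne a), hz] at this
    norm_num [h.apply_ne, (h.apply_ne a).symm] at this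
  have hzσa : B.repr z (σ a) = 0 := repr_eq_zero hz (h.apply_ne a) hσab
  have hσba : σ b ≠ σ a := h.apply_ne_apply hV hz hab hσab
  have hba : σ b ≠ a := fun hba => hσab <| h.apply_eq_of_apply_eq hV hz hab hba
  obtain ⟨G, hG⟩ := hC.isFacetBasis.exists_isFlip hV hmem hal hac
  have heq : z = B (σ b) - B b := by
    refine hG.isFacetBasis.eq_of_repr_neg hV (i := b) h.mem ?_ ?_ (h.sub_mem b) ?_ ?_
    · rw [hG.level_eq, hzl, hC.repr_of_ne _ _ (h.apply_ne a), hzσa, hz]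
      norm_num [hab, h.apply_ne]
    · rw [hG.repr_of_ne _ _ hσab.symm, hC.repr_of_ne _ _ hab.symm, hC.repr_of_ne _ _ hab.symm, hz]
      norm_num [hab, hab.symm, hσab, hσab.symm]
    · simp [hG.level_eq, hC.level_eq, hC.repr_of_ne _ _ (h.apply_ne a), hba, hab.symm, hσba,
        hσab.symm]
    · rw [hG.repr_of_ne _ _ hσab.symm, hC.repr_of_ne _ _ hab.symm, hC.repr_of_ne _ _ hab.symm]
      simp [hab, hab.symm, hσab, h.apply_ne]
  have hl := h.level_eq
  rw [heq] at hl
  norm_num at hl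

-- Otherwise `V` would have at most `d + d + (d - 3) + 1` elements.
lemma neg_mem (h : IsPairedFacet V B z σ) (hV : IsVertexConfiguration V)
    (hz : z = -B a - B b) (hab : a ≠ b) (ha : i ≠ a) (hb : i ≠ b) : -B i ∈ V := by
  classical
  by_contra hi
  have hsub : V ⊆ ((Finset.univ.image fun j => B j) ∪ (Finset.univ.image fun j => B (σ j) - B j)) ∪
      insert z (({i, a, b} : Finset (Fin d))ᶜ.image fun j => -B j) := by
    intro v hv
    simp only [Finset.mem_union, Finset.mem_image, Finset.mem_univ, true_and, Finset.mem_insert,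
      Finset.mem_compl, Finset.mem_singleton, not_or]
    rcases h.mem_cases hV hv with ⟨j, rfl⟩ | ⟨j, rfl⟩ | ⟨j, rfl⟩ | rfl
    · exact .inl (.inl ⟨j, rfl⟩)
    · exact .inl (.inr ⟨j, rfl⟩)
    · refine .inr (.inr ⟨j, ⟨?_, ?_, ?_⟩, rfl⟩)
      · rintro rfl
        exact hi hv
      · rintro rfl
        exact h.neg_notMem hV hz hab hv
      · rintro rfl
        exact h.neg_notMem hV (by rw [hz]; abel) hab.symm hv
    · exact .inr (.inl rfl)
  have hthree : ({i, a, b} : Finset (Fin d)).card = 3 := by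
    simp [ha, hb, hab]
  have hd := Finset.card_add_card_compl ({i, a, b} : Finset (Fin d))
  have hcard : V.card ≤ d + d + (({i, a, b} : Finset (Fin d))ᶜ.card + 1) := by
    refine (Finset.card_le_card hsub).trans <| (Finset.card_union_le _ _).trans <|
      add_le_add ((Finset.card_union_le _ _).trans <| add_le_add ?_ ?_) <|
        (Finset.card_insert_le _ _).trans <| Nat.succ_le_succ Finset.card_image_le
    all_goals exact Finset.card_image_le.trans (by simp)
  have := hV.card_add_one
  rw [Fintype.card_fin] at hd
  omega

-- Otherwise crossing from `B` at `a`, `b` and `σ a` would give a facet at which both `B b` and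
-- `-B (σ a)` have level `0` and a negative `b`-th coordinate.
theorem apply_eq (h : IsPairedFacet V B z σ) (hV : IsVertexConfiguration V)
    (hz : z = -B a - B b) (hab : a ≠ b) : σ a = b := by
  by_contra hne
  have hne' : b ≠ σ a := Ne.symm hne
  have hσa : σ a ≠ a := h.apply_ne a
  have hba : σ b ≠ a := fun hba => hne <| h.apply_eq_of_apply_eq hV hz hab hba
  have hσba : σ b ≠ σ a := h.apply_ne_apply hV hz hab hne
  obtain ⟨C, hC⟩ := h.exists_isFlip hV a
  obtain ⟨G, hG⟩ := hC.isFacetBasis.exists_isFlip hV (h.sub_mem b) (i := b)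
    (by simp [hC.level_eq, hab.symm, hba])
    (by simp [hC.repr_of_ne _ _ hab.symm, hab.symm, hba, h.apply_ne])
  have hGl : ∀ v, level G v = level B v - B.repr v a - B.repr v b := fun v => by
    simp [hG.level_eq, hC.level_eq, hC.repr_of_ne _ _ hab.symm, hne, hab]
  have hGb : ∀ v, G.repr v b = -B.repr v b := fun v => by
    simp [hG.repr_self, hC.repr_of_ne _ _ hab.symm, hne, hab]
  have hGσa : ∀ v, G.repr v (σ a) = B.repr v (σ a) + B.repr v a := fun v => by
    simp [hG.repr_of_ne _ _ hne, hC.repr_of_ne _ _ hσa, hσa, hba, hσba, hab.symm, hne']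
  obtain ⟨H, hH⟩ := hG.isFacetBasis.exists_isFlip hV h.mem (i := σ a)
    (by rw [hGl, h.level_eq, hz]; norm_num [hab, hab.symm])
    (by rw [hGσa, hz]; norm_num [hσa.symm, hne', hab.symm])
  have heq : B b = -B (σ a) := by
    refine hH.isFacetBasis.eq_of_repr_neg hV (i := b) (h.isFacetBasis.mem b) ?_ ?_
      (h.neg_mem hV hz hab hσa hne) ?_ ?_
    · simp [hH.level_eq, hGl, hGσa, hab.symm, hne']
    · simp [hH.repr_of_ne _ _ hne', hGb, hGσa, hab.symm, hne']
    · simp [hH.level_eq, hGl, hGσa, hσa, hne]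
    · simp [hH.repr_of_ne _ _ hne', hGb, hGσa, hσa, hne, hz, hab]
  have := congrArg (level B) heq
  norm_num at this

end IsPairedFacet

/-- `V` is the vertex set of a polytope splitting into the pentagon with vertices `B a`, `B b`,
`-B a - B b`, `±(B a - B b)` and, for each other `2`-cycle `(i, j)` of the involution `σ`, the
hexagon with vertices `±B i`, `±B j`, `±(B i - B j)`. -/
structure IsHexagonsWithPentagon (V : Finset (Fin d → ℝ)) (B : Module.Basis (Fin d) ℝ (Fin d → ℝ))
    (σ : Fin d → Fin d) (a b : Fin d) : Prop where
  isLatticeBasis : IsLatticeBasis B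
  involutive : Function.Involutive σ
  apply_ne : ∀ i, σ i ≠ i
  apply_eq : σ a = b
  coe_eq : (V : Set (Fin d → ℝ)) = {B a, B b, B b - B a, -B a - B b, B a - B b} ∪
    ⋃ i ∈ ({a, b}ᶜ : Set (Fin d)), hexagonPart B σ i

theorem IsPairedFacet.isHexagonsWithPentagon (h : IsPairedFacet V B z σ)
    (hV : IsVertexConfiguration V) (hz : z = -B a - B b) (hab : a ≠ b) :
    IsHexagonsWithPentagon V B σ a b := by
  have hz' : z = -B b - B a := by rw [hz]; abel
  have ha : σ a = b := h.apply_eq hV hz hab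
  have hb : σ b = a := h.apply_eq hV hz' hab.symm
  refine ⟨h.isLatticeBasis, fun i => ?_, h.apply_ne, ha, Set.ext fun v => ?_⟩
  · by_cases hia : i = a
    · rw [hia, ha, hb]
    by_cases hib : i = b
    · rw [hib, hb, ha]
    · exact h.apply_apply_of_neg_mem hV (h.neg_mem hV hz hab hia hib)
  simp only [Finset.mem_coe, Set.mem_union, Set.mem_insert_iff, Set.mem_singleton_iff,
    Set.mem_iUnion, Set.mem_compl_iff, exists_prop, not_or, hexagonPart]
  constructor
  · intro hv
    have hna := h.neg_notMem hV hz hab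
    have hnb := h.neg_notMem hV hz' hab.symm
    rcases h.mem_cases hV hv with ⟨i, rfl⟩ | ⟨i, rfl⟩ | ⟨i, rfl⟩ | rfl <;> grind
  · have hmem := h.isFacetBasis.mem
    have hsub := h.sub_mem
    rintro ((rfl | rfl | rfl | rfl | rfl) | ⟨i, ⟨hia, hib⟩, rfl | rfl | rfl⟩)
    · exact hmem a
    · exact hmem b
    · exact ha ▸ hsub a
    · exact hz ▸ h.mem
    · exact hb ▸ hsub b
    · exact hmem i
    · exact h.neg_mem hV hz hab hia hib
    · exact hsub i

theorem IsVertexConfiguration.isHexagonsWithPentagon_or_isHexagonsWithSegment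
    (hV : IsVertexConfiguration V) :
    (∃ B σ a b, IsHexagonsWithPentagon V B σ a b) ∨ ∃ B σ o, IsHexagonsWithSegment V B σ o := by
  by_cases hdeep : ∃ B z, IsDeepFacet V B z
  · obtain ⟨B, z, h⟩ := hdeep
    obtain ⟨σ, h⟩ := h.exists_isPairedFacet hV
    obtain ⟨a, b, hab, hz⟩ := h.exists_eq_neg_sub hV
    exact .inl ⟨B, σ, a, b, h.isHexagonsWithPentagon hV hz hab⟩
  · obtain ⟨B, hB⟩ := hV.exists_isFacetBasis
    have hneg : ∀ v ∈ V, -v ∈ V := hV.neg_mem fun C hC v hv => by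
      have hne : level C v ≠ -2 := fun hl => hdeep ⟨C, v, hC, hv, hl⟩
      rcases hC.level_eq_cases hV hv with hl | hl | hl | hl
      · norm_num [hl]
      · norm_num [hl]
      · exact hl.ge
      · exact absurd hl hne
    obtain ⟨σ, o, h⟩ := hB.exists_isHexagonsWithSegment hV hneg
    exact .inr ⟨B, σ, o, h⟩

end PairedFacet

section Model

variable {d k : ℕ} {V : Finset (Fin d → ℝ)} {B C : Module.Basis (Fin d) ℝ (Fin d → ℝ)}
  {σ : Fin d → Fin d} {v : Fin d → ℝ} {a b o : Fin d}

lemma exists_bijective_elim_of_involutive {α ι : Type*} [Finite α] [LinearOrder α] {σ : α → α}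
    (hσ : Function.Involutive σ) {q : ι → α} (hq : Function.Injective q)
    (hne : ∀ i ∉ Set.range q, σ i ≠ i) (hmem : ∀ j, σ (q j) ∈ Set.range q) :
    ∃ (m : ℕ) (r : Fin m → α), Function.Bijective (Sum.elim q (Sum.elim r (σ ∘ r))) := by
  have hmem' : ∀ i ∉ Set.range q, σ i ∉ Set.range q := by
    rintro i hi ⟨j, hj⟩
    exact hi <| by simpa [hj, hσ i] using hmem j
  obtain ⟨m, ⟨e⟩⟩ := Finite.exists_equiv_fin {i : α // i ∉ Set.range q ∧ i < σ i}
  set r : Fin m → α := fun j => e.symm j with hr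
  have hrq : ∀ j, r j ∉ Set.range q := fun j => (e.symm j).2.1
  have hlt : ∀ j, r j < σ (r j) := fun j => (e.symm j).2.2
  have hinj : Function.Injective r := Subtype.val_injective.comp e.symm.injective
  have hsurj : ∀ i ∉ Set.range q, i < σ i → ∃ j, r j = i := fun i hi hiσ =>
    ⟨e ⟨i, hi, hiσ⟩, by simp [hr]⟩
  refine ⟨m, r, hq.sumElim (hinj.sumElim (hσ.injective.comp hinj) fun j j' hj => ?_) ?_,
    fun i => ?_⟩
  · have h := hlt j
    rw [hj, Function.comp_apply, hσ] at h
    exact h.asymm (hlt j')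
  · rintro i (j | j) h
    · exact hrq j ⟨i, h⟩
    · exact hmem' _ (hrq j) ⟨i, h⟩
  · by_cases hi : i ∈ Set.range q
    · obtain ⟨j, rfl⟩ := hi
      exact ⟨.inl j, rfl⟩
    rcases (hne i hi).lt_or_gt with h | h
    · obtain ⟨j, hj⟩ := hsurj (σ i) (hmem' i hi) (by rwa [hσ])
      exact ⟨.inr (.inr j), by simp [hj, hσ i]⟩
    · obtain ⟨j, hj⟩ := hsurj i hi h
      exact ⟨.inr (.inl j), hj⟩

lemma compl_range_of_bijective_elim {α β γ : Type*} {f : α → γ} {g : β → γ}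
    (h : Function.Bijective (Sum.elim f g)) : (Set.range f)ᶜ = Set.range g := by
  rw [← Sum.elim_comp_inl f g, Set.range_comp, ← Set.image_compl_eq h, Set.compl_range_inl,
    ← Set.range_comp, Sum.elim_comp_inr]

/-- The coordinates of the model: the indices of the distinguished summand of rank `k` come first,
then the pairs of indices of the `m` hexagons. -/
def splitIndex (k m : ℕ) : Fin k ⊕ Fin m ⊕ Fin m → Fin (k + 2 * m) :=
  Sum.elim (fun j => ⟨j, by omega⟩) <|
    Sum.elim (fun j => ⟨2 * j + k, by omega⟩) (fun j => ⟨2 * j + k + 1, by omega⟩)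

lemma splitIndex_bijective (k m : ℕ) : Function.Bijective (splitIndex k m) := by
  rw [Fintype.bijective_iff_injective_and_card]
  refine ⟨?_, by simp; omega⟩
  rintro (i | i | i) (j | j | j) h <;> simp [splitIndex, Fin.ext_iff] at h ⊢ <;> omega

/-- The standard basis vector of `ℝ ^ d` with entry `1` in position `n`. -/
def stdVec (d n : ℕ) : Fin d → ℝ := fun i => if (i : ℕ) = n then 1 else 0

lemma stdVec_coe (i : Fin d) : stdVec d i = Pi.single i 1 := by
  ext j
  simp [stdVec, Pi.single_apply, Fin.ext_iff]

lemma embed2_eq (d o : ℕ) (v : Fin 2 → ℤ) :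
    embed2 d o v = (v 0 : ℝ) • stdVec d o + (v 1 : ℝ) • stdVec d (o + 1) := by
  ext i
  simp only [embed2, stdVec, Pi.add_apply, Pi.smul_apply, smul_eq_mul]
  split_ifs <;> first | omega | simp

lemma embed3_eq (d : ℕ) (v : Fin 3 → ℤ) :
    embed3 d v = (v 0 : ℝ) • stdVec d 0 + (v 1 : ℝ) • stdVec d 1 + (v 2 : ℝ) • stdVec d 2 := by
  ext i
  simp only [embed3, stdVec, Pi.add_apply, Pi.smul_apply, smul_eq_mul]
  split_ifs <;> first | omega | simp

lemma IsLatticeBasis.isLP_iff (hB : IsLatticeBasis B) :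
    IsLP v ↔ ∀ i, ∃ n : ℤ, B.repr v i = n := by
  refine ⟨hB.2 v, fun h i => ?_⟩
  choose n hn using h
  choose m hm using fun j => hB.1 j i
  refine ⟨∑ j, n j * m j, ?_⟩
  rw [← B.sum_repr v, Finset.sum_apply]
  simp [hn, hm]

lemma IsLatticeBasis.unimodular_equiv (hB : IsLatticeBasis B) (hC : IsLatticeBasis C)
    (π : Equiv.Perm (Fin d)) : Unimodular (B.equiv C π) := fun v => by
  have hrepr : ∀ i, C.repr (B.equiv C π v) (π i) = B.repr v i := fun i => by
    rw [← (C.reindex π.symm).repr.apply_symm_apply (B.repr v), C.repr_reindex_apply, π.symm_symm]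
    rfl
  rw [hB.isLP_iff, hC.isLP_iff]
  exact π.forall_congr fun i => by rw [hrepr]

lemma isLatticeBasis_unitsSMul_basisFun (ε : Fin d → ℤˣ) :
    IsLatticeBasis ((Pi.basisFun ℝ (Fin d)).unitsSMul fun i =>
      Units.map (Int.castRingHom ℝ) (ε i)) := by
  refine ⟨fun i j => ?_, fun v hv i => ?_⟩
  · refine ⟨(Pi.single i (ε i : ℤ) : Fin d → ℤ) j, ?_⟩
    rcases eq_or_ne j i with rfl | h <;> simp [Module.Basis.unitsSMul_apply, Units.smul_def, *]
  · obtain ⟨n, hn⟩ := hv i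
    refine ⟨((ε i)⁻¹ : ℤˣ) * n, ?_⟩
    simp [Module.Basis.repr_unitsSMul, hn, Units.smul_def, ← map_inv]

lemma IsLatticeBasis.exists_unimodular (hB : IsLatticeBasis B) (π : Equiv.Perm (Fin d))
    (ε : Fin d → ℤˣ) : ∃ φ : (Fin d → ℝ) ≃ₗ[ℝ] (Fin d → ℝ), Unimodular φ ∧
      ∀ i, φ (B i) = ((ε i : ℤ) : ℝ) • stdVec d (π i) := by
  refine ⟨_, hB.unimodular_equiv (isLatticeBasis_unitsSMul_basisFun (ε ∘ π.symm)) π, fun i => ?_⟩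
  simp [Module.Basis.unitsSMul_apply, stdVec_coe, Units.smul_def]

lemma image_embed2_V2v (d o : ℕ) : embed2 d o '' V2v =
    {stdVec d o, stdVec d (o + 1), stdVec d o + stdVec d (o + 1), -stdVec d o, -stdVec d (o + 1),
      -stdVec d o - stdVec d (o + 1)} := by
  simp [V2v, Set.image_insert_eq, embed2_eq, sub_eq_add_neg]

lemma image_embed2_E2v (d : ℕ) : embed2 d 0 '' E2v =
    {stdVec d 0, stdVec d 1, stdVec d 1 - stdVec d 0, -stdVec d 0 - stdVec d 1,
      stdVec d 0 - stdVec d 1} := by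
  simp [E2v, Set.image_insert_eq, embed2_eq, ← sub_eq_add_neg, neg_add_eq_sub]

lemma image_embed3_Q3v (d : ℕ) : embed3 d '' Q3v =
    {stdVec d 0, -stdVec d 0, stdVec d 1, -stdVec d 1, stdVec d 0 + stdVec d 1,
      -stdVec d 0 - stdVec d 1, stdVec d 2, -stdVec d 2} := by
  simp [Q3v, Set.image_insert_eq, embed3_eq, sub_eq_add_neg]

lemma exists_unimodular_of_involutive (hB : IsLatticeBasis B) (hσ : Function.Involutive σ)
    {q : Fin k → Fin d} (hq : Function.Injective q) (hne : ∀ i ∉ Set.range q, σ i ≠ i)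
    (hmem : ∀ j, σ (q j) ∈ Set.range q) (s : Fin k → ℤˣ) :
    ∃ m, d = k + 2 * m ∧ ∃ φ : (Fin d → ℝ) ≃ₗ[ℝ] (Fin d → ℝ), Unimodular φ ∧
      (∀ j, φ (B (q j)) = ((s j : ℤ) : ℝ) • stdVec d j) ∧
      φ '' (⋃ i ∈ (Set.range q)ᶜ, hexagonPart B σ i) =
        ⋃ j ∈ Finset.range m, embed2 d (2 * j + k) '' V2v := by
  obtain ⟨m, r, hr⟩ := exists_bijective_elim_of_involutive hσ hq hne hmem
  have hd : d = k + 2 * m := by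
    have := Fintype.card_of_bijective hr
    simp only [Fintype.card_sum, Fintype.card_fin] at this
    omega
  subst hd
  let e := Equiv.ofBijective _ hr
  let ε : Fin k ⊕ Fin m ⊕ Fin m → ℤˣ := Sum.elim s (Sum.elim 1 (-1))
  obtain ⟨φ, hφ, hφB⟩ := hB.exists_unimodular
    (e.symm.trans (Equiv.ofBijective _ (splitIndex_bijective k m))) (ε ∘ e.symm)
  have hφe : ∀ x, φ (B (e x)) = ((ε x : ℤ) : ℝ) • stdVec _ (splitIndex k m x) := fun x => by
    simpa using hφB (e x)
  have hφr : ∀ j, φ (B (r j)) = stdVec _ (2 * j + k) := fun j => by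
    simpa [e, ε, splitIndex] using hφe (.inr (.inl j))
  have hφσ : ∀ j, φ (B (σ (r j))) = -stdVec _ (2 * j + k + 1) := fun j => by
    simpa [e, ε, splitIndex] using hφe (.inr (.inr j))
  refine ⟨m, rfl, φ, hφ, fun j => hφe (.inl j), ?_⟩
  have hcompl : (Set.range q)ᶜ = Set.range r ∪ Set.range (σ ∘ r) := by
    rw [← Set.Sum.elim_range, compl_range_of_bijective_elim hr]
  have hpair : ∀ j, φ '' (hexagonPart B σ (r j) ∪ hexagonPart B σ (σ (r j))) =
      embed2 _ (2 * j + k) '' V2v := fun j => by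
    simp only [hexagonPart, hσ (r j), Set.image_union, Set.image_insert_eq, Set.image_singleton,
      map_neg, map_sub, hφr, hφσ, image_embed2_V2v]
    ext v
    simp only [Set.mem_union, Set.mem_insert_iff, Set.mem_singleton_iff, neg_neg, sub_neg_eq_add,
      neg_sub_left]
    grind
  rw [hcompl, Set.biUnion_union, Set.biUnion_range, Set.biUnion_range]
  simp only [Function.comp_apply, ← Set.iUnion_union_distrib, Set.image_iUnion, hpair]
  ext v
  simp [Fin.exists_iff]

theorem IsHexagonsWithPentagon.exists_unimodular (h : IsHexagonsWithPentagon V B σ a b) :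
    Even d ∧ ∃ φ : (Fin d → ℝ) ≃ₗ[ℝ] (Fin d → ℝ), Unimodular φ ∧ φ '' (V : Set (Fin d → ℝ)) =
      embed2 d 0 '' E2v ∪ ⋃ j ∈ Finset.range ((d - 2) / 2), embed2 d (2 * j + 2) '' V2v := by
  have hab : a ≠ b := h.apply_eq ▸ (h.apply_ne a).symm
  have hσb : σ b = a := by rw [← h.apply_eq, h.involutive]
  have hrange : Set.range ![a, b] = {a, b} := by rw [Matrix.range_cons_cons_empty]
  obtain ⟨m, hd, φ, hφ, hφq, himage⟩ := exists_unimodular_of_involutive h.isLatticeBasis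
    h.involutive (q := ![a, b]) (by simp [Function.Injective, Fin.forall_fin_two, hab, hab.symm])
    (fun i _ => h.apply_ne i) (by simp [Fin.forall_fin_two, h.apply_eq, hσb]) 1
  have hφa : φ (B a) = stdVec d 0 := by simpa using hφq 0
  have hφb : φ (B b) = stdVec d 1 := by simpa using hφq 1
  refine ⟨⟨m + 1, by omega⟩, φ, hφ, ?_⟩
  rw [h.coe_eq, Set.image_union, ← hrange, himage, show (d - 2) / 2 = m by omega]
  simp only [Set.image_insert_eq, Set.image_singleton, map_sub, map_neg, hφa, hφb,
    image_embed2_E2v]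

theorem IsHexagonsWithSegment.exists_unimodular (h : IsHexagonsWithSegment V B σ o) (hd : 2 ≤ d) :
    Odd d ∧ ∃ φ : (Fin d → ℝ) ≃ₗ[ℝ] (Fin d → ℝ), Unimodular φ ∧ φ '' (V : Set (Fin d → ℝ)) =
      embed3 d '' Q3v ∪ ⋃ j ∈ Finset.range ((d - 3) / 2), embed2 d (2 * j + 3) '' V2v := by
  have : Nontrivial (Fin d) := Fin.nontrivial_iff_two_le.2 hd
  obtain ⟨c, hc⟩ := exists_ne o
  have hσc : σ c ≠ c := (h.apply_eq_self_iff c).not.2 hc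
  have hσo : σ o = o := (h.apply_eq_self_iff o).2 rfl
  have hσco : σ c ≠ o := fun hco => hc <| by rw [← h.involutive c, hco, hσo]
  obtain ⟨m, hm, φ, hφ, hφq, himage⟩ := exists_unimodular_of_involutive h.isLatticeBasis
    h.involutive (q := ![c, σ c, o])
    (by simp [Function.Injective, Fin.forall_fin_succ, hc, hc.symm, hσc, hσc.symm, hσco, hσco.symm])
    (fun i hi hi' => hi <| by simp [(h.apply_eq_self_iff i).1 hi'])
    (by simp [Fin.forall_fin_succ, hσo, h.involutive c]) ![1, -1, 1]
  have hφc : φ (B c) = stdVec d 0 := by simpa using hφq 0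
  have hφσ : φ (B (σ c)) = -stdVec d 1 := by simpa using hφq 1
  have hφo : φ (B o) = stdVec d 2 := by simpa using hφq 2
  refine ⟨⟨m + 1, by omega⟩, φ, hφ, ?_⟩
  have hcompl : ({o}ᶜ : Set (Fin d)) = {c, σ c} ∪ (Set.range ![c, σ c, o])ᶜ := by
    ext i
    simp only [Set.mem_compl_iff, Set.mem_singleton_iff, Set.mem_union, Set.mem_insert_iff,
      Matrix.range_cons, Matrix.range_empty, Set.union_empty]
    grind
  rw [h.coe_eq, hcompl, Set.biUnion_union, Set.biUnion_pair, ← Set.union_assoc, Set.image_union,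
    himage, show (d - 3) / 2 = m by omega, image_embed3_Q3v]
  congr 1
  simp only [hexagonPart, h.involutive c, Set.image_union, Set.image_insert_eq,
    Set.image_singleton, map_sub, map_neg, hφc, hφσ, hφo]
  ext v
  simp only [Set.mem_union, Set.mem_insert_iff, Set.mem_singleton_iff, neg_neg, sub_neg_eq_add,
    neg_sub_left]
  grind

end Model

theorem stmt18_general {d : ℕ} (hd : 2 ≤ d) {P : Set (Fin d → ℝ)} (hP : IsReflexive P)
    (hs : IsSimplicial P) (hcard : (Set.extremePoints ℝ P).ncard = 3 * d - 1)
    {V : Finset (Fin d → ℝ)} (hV : (V : Set (Fin d → ℝ)) = Set.extremePoints ℝ P)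
    (hnu : ∑ v ∈ V, v = 0) :
    (Even d ∧ ∃ φ : (Fin d → ℝ) ≃ₗ[ℝ] (Fin d → ℝ), Unimodular φ ∧
        φ '' P = splitModel2 d E2v) ∨
    (Odd d ∧ ∃ φ : (Fin d → ℝ) ≃ₗ[ℝ] (Fin d → ℝ), Unimodular φ ∧
        φ '' P = splitModel3 d Q3v) := by
  have himage (φ : (Fin d → ℝ) ≃ₗ[ℝ] (Fin d → ℝ)) : φ '' P = convexHull ℝ (φ '' V) := by
    rw [← hP.1.convexHull_eq hV]
    exact φ.toLinearMap.image_convexHull _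
  have hconf := hP.isVertexConfiguration (by omega) hs hcard hV hnu
  rcases hconf.isHexagonsWithPentagon_or_isHexagonsWithSegment with ⟨B, σ, a, b, h⟩ | ⟨B, σ, o, h⟩
  · obtain ⟨hd, φ, hφ, hφV⟩ := h.exists_unimodular
    exact .inl ⟨hd, φ, hφ, by rw [himage, hφV, splitModel2]⟩
  · obtain ⟨hd, φ, hφ, hφV⟩ := h.exists_unimodular hd
    exact .inr ⟨hd, φ, hφ, by rw [himage, hφV, splitModel3]⟩

/-- a `d ≥ 3`-dimensional simplicial reflexive polytope with `3d-1` vertices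
and `ν_P = 0` splits into `(d-2)/2` copies of `V₂` and one `E₂` (`d` even), or into
`(d-3)/2` copies of `V₂` and one `Q₃` (`d` odd). -/
theorem stmt18 {d : ℕ} (hd : 3 ≤ d)
    (P : Set (Fin d → ℝ)) (hP : IsReflexive P) (hs : IsSimplicial P)
    (hcard : (Set.extremePoints ℝ P).ncard = 3 * d - 1)
    (V : Finset (Fin d → ℝ)) (hV : (V : Set (Fin d → ℝ)) = Set.extremePoints ℝ P)
    (hnu : ∑ v ∈ V, v = 0) :
    (Even d ∧ ∃ φ : (Fin d → ℝ) ≃ₗ[ℝ] (Fin d → ℝ), Unimodular φ ∧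
        φ '' P = splitModel2 d E2v) ∨
    (Odd d ∧ ∃ φ : (Fin d → ℝ) ≃ₗ[ℝ] (Fin d → ℝ), Unimodular φ ∧
        φ '' P = splitModel3 d Q3v) :=
  stmt18_general (by omega) hP hs hcard hV hnu
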